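/- Let 1 ≤ n < α, p = 2n/(n+α), q = 2n/(n−α), and let N*(n, α) = π^{(n−α)/2} · Γ(α/2)/Γ((n+α)/2) · (Γ(n/2)/Γ(n))^{−α/n}. A nonnegative F ∈ L^p(𝕊ⁿ) with F not identically zero satisfies ‖Ĩ_α F‖_{L^q(𝕊ⁿ)} = N*(n, α)·‖F‖_{L^p(𝕊ⁿ)} if and only if there exist a > 0 and η ∈ ℝ^{n+1} with |η| < 1 such that F(ξ) = a(1 − ξ·η)^{−(n+α)/2} for all ξ ∈ 𝕊ⁿ. -/

import Mathlib

open MeasureTheory ENNReal Metric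
open scoped RealInnerProductSpace

/-- The standard surface measure on the unit sphere `𝕊ⁿ ⊆ ℝ^(n+1)`. -/
noncomputable def sphereMeasure (n : ℕ) :
    Measure (sphere (0 : EuclideanSpace ℝ (Fin (n + 1))) 1) :=
  (volume : Measure (EuclideanSpace ℝ (Fin (n + 1)))).toSphere

/-- The singular integral operator `Ĩ_α F(ξ) = ∫_{𝕊ⁿ} F(η) |ξ-η|^(α-n) dη` on the sphere,
where `|ξ-η|` is the chordal distance in `ℝ^(n+1)`, valued in `ℝ≥0∞`. -/
noncomputable def sphereRiesz (n : ℕ) (α : ℝ)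
    (F : sphere (0 : EuclideanSpace ℝ (Fin (n + 1))) 1 → ℝ)
    (ξ : sphere (0 : EuclideanSpace ℝ (Fin (n + 1))) 1) : ℝ≥0∞ :=
  ∫⁻ η, ENNReal.ofReal (F η *
    dist (ξ : EuclideanSpace ℝ (Fin (n + 1))) (η : EuclideanSpace ℝ (Fin (n + 1))) ^ (α - n))
    ∂(sphereMeasure n)

/-!
Write `s = α - n`. The quotient `Q F = ‖Ĩ_α F‖_q / ‖F‖_p` is invariant under the Möbius
transformations of the sphere, realised here as Lorentz boosts of the light cone: the boost with
proper velocity `v` has conformal factor `(√(1 + ‖v‖²) - ⟪ω, v⟫)⁻¹`. The transforms of constants are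
multiples of its power with exponent `(n + α) / 2`, which are the extremals after the substitution
`η = v / √(1 + ‖v‖²)`.

*Existence.* Among the conformal transforms of `F` there is a balanced one, of minimal mass. The
potential of a balanced function is at least a quarter of its mass, which is the compactness missing
from the conformally invariant problem; Arzelà–Ascoli then gives a minimiser of `Q`.

*Rigidity.* Polarization across a hyperplane does not increase the energy `∫ F Ĩ_α G`. If `F` is a
minimiser and `G = (Ĩ_α F) ^ (q - 1)` its dual function, then the energy does not decrease either,
and this forces the products of the antisymmetric parts of `F` and `G` to have constant sign. As a
balanced `F` has its centre of mass at the origin, one of the antisymmetric parts vanishes. Hence a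
balanced minimiser is symmetric under all reflections, so constant, and undoing the boost yields all
minimisers.

*Constant.* `Q 1` is read off from `∫ (‖x‖ - ⟪e, x⟫) ^ (s / 2) * exp (-‖x‖) / ‖x‖`, evaluated both
in polar coordinates and by integrating out the hyperplane orthogonal to `e`.

*Non-integrable `F`.* The potential of a non-integrable nonnegative `F` is infinite at all points
but at most one, so its `L^q` functional is infinite because `q < 0`.
-/

open scoped Pointwise
open Module (finrank)

lemma lintegral_map_withDensity {X Y : Type*} [MeasurableSpace X] [MeasurableSpace Y]
    (μ : Measure X) {ρ : X → ℝ≥0∞} (hρ : Measurable ρ) {T : X → Y} (hT : Measurable T)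
    {g : Y → ℝ≥0∞} (hg : Measurable g) :
    ∫⁻ y, g y ∂((μ.withDensity ρ).map T) = ∫⁻ x, ρ x * g (T x) ∂μ := by
  rw [lintegral_map hg hT]
  exact lintegral_withDensity_eq_lintegral_mul _ hρ (hg.comp hT)

section PolarCoordinates

variable {E : Type*} [NormedAddCommGroup E] [NormedSpace ℝ E] [FiniteDimensional ℝ E]
  [MeasurableSpace E] [BorelSpace E] (μ : Measure E) [μ.IsAddHaarMeasure]

lemma lintegral_eq_lintegral_toSphere_volumeIoiPow [Nontrivial E] {f : E → ℝ≥0∞}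
    (hf : Measurable f) :
    ∫⁻ x, f x ∂μ = ∫⁻ ω, ∫⁻ r : Set.Ioi (0 : ℝ), f (r.1 • ω.1)
      ∂(Measure.volumeIoiPow (finrank ℝ E - 1)) ∂μ.toSphere := by
  have hcomp := μ.measurePreserving_homeomorphUnitSphereProd.lintegral_comp_emb
    (Homeomorph.measurableEmbedding _)
    (fun p : sphere (0 : E) 1 × Set.Ioi (0 : ℝ) ↦ f (p.2.1 • p.1.1))
  have hmeas : Measurable fun p : sphere (0 : E) 1 × Set.Ioi (0 : ℝ) ↦ f (p.2.1 • p.1.1) :=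
    hf.comp (by fun_prop)
  rw [lintegral_prod _ hmeas.aemeasurable] at hcomp
  calc ∫⁻ x, f x ∂μ = ∫⁻ x in {0}ᶜ, f x ∂μ := by rw [restrict_compl_singleton]
    _ = ∫⁻ x : ({0}ᶜ : Set E), f x ∂(μ.comap (↑)) :=
      (lintegral_subtype_comap (measurableSet_singleton (0 : E)).compl f).symm
    _ = _ := lintegral_congr fun x ↦ ?_
    _ = _ := hcomp
  have hx : ‖(x : E)‖ ≠ 0 := norm_ne_zero_iff.2 x.2
  simp [smul_smul, hx]

lemma lintegral_volumeIoiPow_ite_lt (m : ℕ) {c : ℝ} (hc : 0 < c) (a : ℝ≥0∞) :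
    ∫⁻ r : Set.Ioi (0 : ℝ), (if r.1 < c then a else 0) ∂(Measure.volumeIoiPow m) =
      a * ENNReal.ofReal (c ^ (m + 1) / (m + 1)) := by
  rw [← Measure.volumeIoiPow_apply_Iio m ⟨c, hc⟩, ← lintegral_indicator_const measurableSet_Iio]
  rfl

lemma lintegral_eq_lintegral_toSphere_of_radial_cutoff [Nontrivial E] {f : E → ℝ≥0∞}
    (hf : Measurable f) {g : sphere (0 : E) 1 → ℝ≥0∞} {c : sphere (0 : E) 1 → ℝ}
    (hc : ∀ ω, 0 < c ω) (hfg : ∀ ω, ∀ r > 0, f (r • ω.1) = if r < c ω then g ω else 0) :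
    ∫⁻ x, f x ∂μ =
      (∫⁻ ω, g ω * ENNReal.ofReal (c ω ^ finrank ℝ E) ∂μ.toSphere) / finrank ℝ E := by
  obtain ⟨m, hm⟩ : ∃ m, finrank ℝ E = m + 1 :=
    Nat.exists_eq_succ_of_ne_zero (Module.finrank_pos (R := ℝ) (M := E)).ne'
  rw [lintegral_eq_lintegral_toSphere_volumeIoiPow μ hf, div_eq_mul_inv,
    ← lintegral_mul_const' _ _ (by simp [hm])]
  refine lintegral_congr fun ω ↦ ?_
  have hslice (r : Set.Ioi (0 : ℝ)) : f (r.1 • ω.1) = if r.1 < c ω then g ω else 0 :=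
    hfg ω r r.2
  simp_rw [hslice, lintegral_volumeIoiPow_ite_lt _ (hc ω), hm, add_tsub_cancel_right, mul_assoc]
  rw [ENNReal.ofReal_div_of_pos (by positivity), div_eq_mul_inv,
    show (m : ℝ) + 1 = ((m + 1 : ℕ) : ℝ) by push_cast; rfl, ENNReal.ofReal_natCast]

/-- The function on `E` which on the open unit ball is the positively homogeneous extension of
degree zero of a function `g` on the unit sphere, and which vanishes at the origin and outside the
ball. It turns integrals over the sphere into integrals over `E`. -/
noncomputable def ballExtension (g : sphere (0 : E) 1 → ℝ≥0∞) : E → ℝ≥0∞ :=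
  Function.extend ((↑) : ({0}ᶜ : Set E) → E)
    (fun x ↦ if ‖x.1‖ < 1 then g (homeomorphUnitSphereProd E x).1 else 0) 0

omit [FiniteDimensional ℝ E] in
lemma measurable_ballExtension {g : sphere (0 : E) 1 → ℝ≥0∞} (hg : Measurable g) :
    Measurable (ballExtension g) :=
  (MeasurableEmbedding.subtype_coe (measurableSet_singleton _).compl).measurable_extend
    (Measurable.ite (measurableSet_lt (by fun_prop) measurable_const)
      (hg.comp ((homeomorphUnitSphereProd E).continuous.measurable.fst)) measurable_const)
    measurable_zero

omit [FiniteDimensional ℝ E] [MeasurableSpace E] [BorelSpace E] in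
lemma ballExtension_smul (g : sphere (0 : E) 1 → ℝ≥0∞) {r : ℝ} (hr : 0 < r)
    (ω : sphere (0 : E) 1) : ballExtension g (r • ω.1) = if r < 1 then g ω else 0 := by
  have hne : r • ω.1 ∈ ({0}ᶜ : Set E) := by
    simpa [hr.ne'] using ne_zero_of_mem_unit_sphere ω
  have hdir : (homeomorphUnitSphereProd E ⟨r • ω.1, hne⟩).1 = ω := by
    ext; simp [norm_smul, smul_smul, abs_of_pos hr, hr.ne']
  rw [ballExtension, Subtype.val_injective.extend_apply _ _ ⟨r • ω.1, hne⟩, hdir]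
  simp [norm_smul, abs_of_pos hr]

omit [FiniteDimensional ℝ E] [MeasurableSpace E] [BorelSpace E] in
lemma norm_div_mul_ballExtension_comp_smul {T : E → E}
    {τ : sphere (0 : E) 1 → sphere (0 : E) 1}
    (hsmul : ∀ r : ℝ, 0 < r → ∀ x, T (r • x) = r • T x)
    (hpos : ∀ ω : sphere (0 : E) 1, 0 < ‖T ω‖)
    (hdir : ∀ ω : sphere (0 : E) 1, T ω = ‖T ω‖ • (τ ω : E))
    (g : sphere (0 : E) 1 → ℝ≥0∞) (ω : sphere (0 : E) 1) {r : ℝ} (hr : 0 < r) :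
    ENNReal.ofReal (‖T (r • ω.1)‖ / ‖r • ω.1‖) * ballExtension g (T (r • ω.1)) =
      if r < ‖T ω‖⁻¹ then ENNReal.ofReal ‖T ω‖ * g (τ ω) else 0 := by
  have hscale : ‖T (r • ω.1)‖ / ‖r • ω.1‖ = ‖T ω‖ := by
    rw [hsmul r hr, norm_smul, norm_smul, norm_eq_of_mem_sphere, mul_one,
      mul_div_cancel_left₀ _ (norm_ne_zero_iff.2 hr.ne')]
  rw [hscale, hsmul r hr, hdir, smul_smul, ← hdir, ballExtension_smul g (mul_pos hr (hpos ω)),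
    mul_ite, mul_zero]
  simp only [inv_eq_one_div, lt_div_iff₀ (hpos ω)]

theorem map_withDensity_toSphere_of_homogeneous [Nontrivial E] {T : E → E}
    {τ : sphere (0 : E) 1 → sphere (0 : E) 1} (hT : Measurable T) (hτ : Measurable τ)
    (hsmul : ∀ r : ℝ, 0 < r → ∀ x, T (r • x) = r • T x)
    (hpos : ∀ ω : sphere (0 : E) 1, 0 < ‖T ω‖)
    (hdir : ∀ ω : sphere (0 : E) 1, T ω = ‖T ω‖ • (τ ω : E))
    (hmap : (μ.withDensity fun x ↦ ENNReal.ofReal (‖T x‖ / ‖x‖)).map T = μ) :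
    (μ.toSphere.withDensity fun ω ↦
      ENNReal.ofReal (‖T ω‖ ^ (1 - finrank ℝ E : ℝ))).map τ = μ.toSphere := by
  have hdensity : Measurable fun x : E ↦ ENNReal.ofReal (‖T x‖ / ‖x‖) := by fun_prop
  refine Measure.ext_of_lintegral _ fun g hg ↦ ?_
  have hext := measurable_ballExtension hg
  have hweight (ω : sphere (0 : E) 1) :
      ENNReal.ofReal ‖T ω‖ * g (τ ω) * ENNReal.ofReal (‖T ω‖⁻¹ ^ finrank ℝ E) =
        ENNReal.ofReal (‖T ω‖ ^ (1 - finrank ℝ E : ℝ)) * g (τ ω) := by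
    rw [mul_right_comm, ← ENNReal.ofReal_mul (hpos ω).le, Real.rpow_sub (hpos ω), Real.rpow_one,
      Real.rpow_natCast, inv_pow, div_eq_mul_inv]
  have hfinrank : (finrank ℝ E : ℝ≥0∞) ≠ 0 :=
    Nat.cast_ne_zero.2 (Module.finrank_pos (R := ℝ) (M := E)).ne'
  have hball := lintegral_eq_lintegral_toSphere_of_radial_cutoff μ hext (fun _ ↦ one_pos)
    fun ω r hr ↦ ballExtension_smul g hr ω
  have hpull := lintegral_eq_lintegral_toSphere_of_radial_cutoff μ
    (hdensity.mul (hext.comp hT)) (fun ω ↦ inv_pos.2 (hpos ω))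
    fun ω r hr ↦ norm_div_mul_ballExtension_comp_smul hsmul hpos hdir g ω hr
  have hchange := lintegral_map_withDensity μ hdensity hT hext
  rw [hmap] at hchange
  rw [lintegral_map_withDensity _ (by fun_prop) hτ hg]
  have hscaled := hpull.symm.trans (hchange.symm.trans hball)
  simp only [hweight, one_pow, ENNReal.ofReal_one, mul_one, div_eq_mul_inv] at hscaled
  exact (ENNReal.mul_left_inj (ENNReal.inv_ne_zero.2 (natCast_ne_top _))
    (ENNReal.inv_ne_top.2 hfinrank)).1 hscaled

lemma toSphere_singleton_of_one_lt_finrank (h : 1 < finrank ℝ E) (ω : sphere (0 : E) 1) :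
    μ.toSphere {ω} = 0 := by
  have hspan : ℝ ∙ (ω : E) ≠ ⊤ := fun htop ↦ by
    have := finrank_span_singleton (K := ℝ) (ne_zero_of_mem_unit_sphere ω)
    rw [htop, finrank_top] at this
    lia
  have hcone : Set.Ioo (0 : ℝ) 1 • ((↑) '' ({ω} : Set (sphere (0 : E) 1)) : Set E) ⊆
      (ℝ ∙ (ω : E) : Submodule ℝ E) := by
    rintro _ ⟨r, -, _, ⟨_, rfl, rfl⟩, rfl⟩
    exact Submodule.smul_mem _ _ (Submodule.mem_span_singleton_self _)
  rw [μ.toSphere_apply' (measurableSet_singleton _),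
    measure_mono_null hcone (Measure.addHaar_submodule μ _ hspan), mul_zero]

end PolarCoordinates

section LorentzBoost

variable {E : Type*} [NormedAddCommGroup E]

/-- The Lorentz factor `√(1 + |v|²)` of the boost of Minkowski space `ℝ × E` with proper
velocity `v`. -/
noncomputable def lorentzFactor (v : E) : ℝ := √(1 + ‖v‖ ^ 2)

lemma lorentzFactor_sq (v : E) : lorentzFactor v ^ 2 = 1 + ‖v‖ ^ 2 := Real.sq_sqrt (by positivity)

lemma lorentzFactor_pos (v : E) : 0 < lorentzFactor v := Real.sqrt_pos.2 (by positivity)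

lemma lorentzFactor_neg (v : E) : lorentzFactor (-v) = lorentzFactor v := by simp [lorentzFactor]

lemma norm_lt_lorentzFactor (v : E) : ‖v‖ < lorentzFactor v :=
  Real.lt_sqrt_of_sq_lt (by linarith)

variable [InnerProductSpace ℝ E]

/-- The time component of the Lorentz boost with proper velocity `v`, at the event `(t, x)`. -/
noncomputable def boostTime (v : E) (t : ℝ) (x : E) : ℝ := lorentzFactor v * t - ⟪x, v⟫

/-- The space component of the Lorentz boost with proper velocity `v`, at the event `(t, x)`. -/
noncomputable def boostSpace (v : E) (t : ℝ) (x : E) : E :=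
  x + (⟪x, v⟫ / (lorentzFactor v + 1) - t) • v

/-- The Lorentz boost restricted to the forward light cone `t = |x|`, which is identified with `E`
through its space component. -/
noncomputable def coneBoost (v x : E) : E := boostSpace v ‖x‖ x

lemma real_inner_self_eq_lorentzFactor_sq_sub_one (v : E) : ⟪v, v⟫ = lorentzFactor v ^ 2 - 1 := by
  rw [real_inner_self_eq_norm_sq, lorentzFactor_sq, add_sub_cancel_left]

lemma boost_minkowski_inner (v : E) (t s : ℝ) (x y : E) :
    boostTime v t x * boostTime v s y - ⟪boostSpace v t x, boostSpace v s y⟫ =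
      t * s - ⟪x, y⟫ := by
  have hγ : lorentzFactor v + 1 ≠ 0 := by linarith [lorentzFactor_pos v]
  simp only [boostTime, boostSpace, inner_add_left, inner_add_right, real_inner_smul_left,
    real_inner_smul_right, real_inner_self_eq_lorentzFactor_sq_sub_one, real_inner_comm y v]
  field_simp
  ring

lemma boostSpace_neg_boost (v : E) (t : ℝ) (x : E) :
    boostSpace (-v) (boostTime v t x) (boostSpace v t x) = x := by
  have hγ : lorentzFactor v + 1 ≠ 0 := by linarith [lorentzFactor_pos v]
  simp only [boostTime, boostSpace, inner_add_left, inner_neg_right, real_inner_smul_left,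
    real_inner_self_eq_lorentzFactor_sq_sub_one, lorentzFactor_neg]
  match_scalars <;> field_simp
  ring

lemma boostTime_pos (v : E) {t : ℝ} {x : E} (hxt : ‖x‖ ≤ t) (ht : 0 < t) :
    0 < boostTime v t x := by
  have hinner : ⟪x, v⟫ ≤ t * ‖v‖ := (real_inner_le_norm x v).trans (by gcongr)
  have hγ : t * ‖v‖ < t * lorentzFactor v := by gcongr; exact norm_lt_lorentzFactor v
  unfold boostTime
  linarith

lemma coneBoost_zero (v : E) : coneBoost v 0 = 0 := by simp [coneBoost, boostSpace]

lemma norm_coneBoost (v x : E) : ‖coneBoost v x‖ = boostTime v ‖x‖ x := by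
  rcases eq_or_ne x 0 with rfl | hx
  · simp [coneBoost_zero, boostTime]
  refine (sq_eq_sq₀ (norm_nonneg _) (boostTime_pos v le_rfl (norm_pos_iff.2 hx)).le).1 ?_
  have h := boost_minkowski_inner v ‖x‖ ‖x‖ x x
  rw [real_inner_self_eq_norm_sq, real_inner_self_eq_norm_sq] at h
  rw [coneBoost]
  linarith

lemma coneBoost_neg_coneBoost (v x : E) : coneBoost (-v) (coneBoost v x) = x := by
  conv_lhs => rw [coneBoost]
  rw [norm_coneBoost, coneBoost, boostSpace_neg_boost]

lemma coneBoost_coneBoost_neg (v x : E) : coneBoost v (coneBoost (-v) x) = x := by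
  simpa only [neg_neg] using coneBoost_neg_coneBoost (-v) x

lemma coneBoost_smul (v : E) {r : ℝ} (hr : 0 < r) (x : E) :
    coneBoost v (r • x) = r • coneBoost v x := by
  rw [coneBoost, coneBoost, boostSpace, boostSpace, norm_smul, Real.norm_of_nonneg hr.le,
    real_inner_smul_left]
  match_scalars <;> ring

lemma continuous_coneBoost (v : E) : Continuous (coneBoost v) := by
  unfold coneBoost boostSpace
  fun_prop

lemma coneBoost_image_compl_zero (v : E) : coneBoost v '' {0}ᶜ = {0}ᶜ := by
  have hne (w : E) {x : E} (hx : x ≠ 0) : coneBoost w x ≠ 0 := fun h ↦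
    hx (by rw [← coneBoost_neg_coneBoost w x, h, coneBoost_zero])
  refine Set.Subset.antisymm (Set.image_subset_iff.2 fun x hx ↦ hne v hx) fun x hx ↦ ?_
  exact ⟨coneBoost (-v) x, hne (-v) hx, coneBoost_coneBoost_neg v x⟩

lemma hasFDerivAt_norm_of_ne_zero {x : E} (hx : x ≠ 0) :
    HasFDerivAt (fun y : E ↦ ‖y‖) (‖x‖⁻¹ • innerSL ℝ x) x := by
  have h := (hasStrictFDerivAt_norm_sq x).hasFDerivAt.sqrt
    (pow_ne_zero 2 (norm_ne_zero_iff.2 hx))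
  simp only [Real.sqrt_sq (norm_nonneg _)] at h
  convert! h using 1
  ext y
  simp
  field_simp

/-- The derivative of `coneBoost v` away from the origin. -/
noncomputable def coneBoostDeriv (v x : E) : E →L[ℝ] E :=
  .id ℝ E + ((lorentzFactor v + 1)⁻¹ • innerSL ℝ v - ‖x‖⁻¹ • innerSL ℝ x).smulRight v

lemma hasFDerivAt_coneBoost (v : E) {x : E} (hx : x ≠ 0) :
    HasFDerivAt (coneBoost v) (coneBoostDeriv v x) x := by
  have h := ((innerSL ℝ v).hasFDerivAt (x := x)).const_mul (lorentzFactor v + 1)⁻¹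
  have := (hasFDerivAt_id x).add ((h.sub (hasFDerivAt_norm_of_ne_zero hx)).smul_const v)
  convert! this using 2
  funext y
  simp [coneBoost, boostSpace, real_inner_comm, div_eq_inv_mul]

lemma det_coneBoostDeriv [FiniteDimensional ℝ E] (v : E) {x : E} (hx : x ≠ 0) :
    (coneBoostDeriv v x).det = ‖coneBoost v x‖ / ‖x‖ := by
  have hx' : ‖x‖ ≠ 0 := norm_ne_zero_iff.2 hx
  have hγ : lorentzFactor v + 1 ≠ 0 := by linarith [lorentzFactor_pos v]
  have htransvection : (coneBoostDeriv v x : E →ₗ[ℝ] E) = LinearMap.transvection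
      ((lorentzFactor v + 1)⁻¹ • innerSL ℝ v - ‖x‖⁻¹ • innerSL ℝ x : E →L[ℝ] ℝ).toLinearMap v := by
    ext y
    simp [coneBoostDeriv, LinearMap.transvection]
  rw [ContinuousLinearMap.det, htransvection, LinearMap.transvection.det, norm_coneBoost]
  simp only [boostTime, ContinuousLinearMap.coe_coe, sub_apply, smul_apply, innerSL_apply_apply,
    real_inner_self_eq_lorentzFactor_sq_sub_one, smul_eq_mul]
  field_simp
  ring

lemma map_coneBoost_withDensity [Nontrivial E] [FiniteDimensional ℝ E] [MeasurableSpace E]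
    [BorelSpace E]
    (μ : Measure E) [μ.IsAddHaarMeasure] (v : E) :
    (μ.withDensity fun x ↦ ENNReal.ofReal (‖coneBoost v x‖ / ‖x‖)).map (coneBoost v) = μ := by
  have hcompl : MeasurableSet ({0}ᶜ : Set E) := (measurableSet_singleton 0).compl
  have h := map_withDensity_abs_det_fderiv_eq_addHaar μ hcompl.nullMeasurableSet
    (fun x hx ↦ (hasFDerivAt_coneBoost v hx).hasFDerivWithinAt)
    (Function.LeftInverse.injective (coneBoost_neg_coneBoost v)).injOn
  rw [coneBoost_image_compl_zero, restrict_compl_singleton] at h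
  convert h using 2
  refine withDensity_congr_ae ?_
  filter_upwards [compl_mem_ae_iff.2 (measure_singleton (μ := μ) 0)] with x hx
  rw [det_coneBoostDeriv v hx, abs_of_nonneg (by positivity)]

end LorentzBoost

section MobiusTransformation

variable {E : Type*} [NormedAddCommGroup E] [InnerProductSpace ℝ E]

/-- The factor by which the Lorentz boost with proper velocity `v` rescales the light ray through
the point `ω` of the unit sphere. Its inverse is the conformal factor of `mobius v` at `ω`. -/
noncomputable def boostFactor (v : E) (ω : sphere (0 : E) 1) : ℝ := lorentzFactor v - ⟪(ω : E), v⟫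

lemma boostFactor_eq_boostTime (v : E) (ω : sphere (0 : E) 1) :
    boostFactor v ω = boostTime v 1 ω := by
  rw [boostFactor, boostTime, mul_one]

lemma boostFactor_pos (v : E) (ω : sphere (0 : E) 1) : 0 < boostFactor v ω :=
  boostFactor_eq_boostTime v ω ▸ boostTime_pos v (norm_eq_of_mem_sphere ω).le one_pos

lemma continuous_boostFactor_uncurry :
    Continuous fun p : E × sphere (0 : E) 1 ↦ boostFactor p.1 p.2 := by
  unfold boostFactor lorentzFactor
  fun_prop

lemma continuous_boostFactor (v : E) : Continuous (boostFactor v) :=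
  continuous_boostFactor_uncurry.comp (.prodMk_right v)

lemma continuous_boostFactor_rpow (v : E) (s : ℝ) : Continuous fun ω ↦ boostFactor v ω ^ s :=
  (continuous_boostFactor v).rpow_const fun ω ↦ .inl (boostFactor_pos v ω).ne'

lemma boostFactor_zero (ω : sphere (0 : E) 1) : boostFactor 0 ω = 1 := by
  simp [boostFactor, lorentzFactor]

lemma norm_coneBoost_coe (v : E) (ω : sphere (0 : E) 1) : ‖coneBoost v ω‖ = boostFactor v ω := by
  rw [norm_coneBoost, norm_eq_of_mem_sphere, boostFactor_eq_boostTime]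

/-- The conformal transformation of the unit sphere, regarded as the set of light rays of Minkowski
space `ℝ × E`, induced by the Lorentz boost with proper velocity `v`. -/
noncomputable def mobius (v : E) (ω : sphere (0 : E) 1) : sphere (0 : E) 1 :=
  ⟨(boostFactor v ω)⁻¹ • coneBoost v ω, by
    have := boostFactor_pos v ω
    simp [norm_smul, norm_coneBoost_coe, abs_of_pos this, this.ne']⟩

lemma boostFactor_smul_mobius (v : E) (ω : sphere (0 : E) 1) :
    boostFactor v ω • (mobius v ω : E) = coneBoost v ω := by
  simp [mobius, smul_smul, (boostFactor_pos v ω).ne']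

lemma boostSpace_one_coe (v : E) (ω : sphere (0 : E) 1) :
    boostSpace v 1 ω = boostFactor v ω • (mobius v ω : E) := by
  rw [boostFactor_smul_mobius, coneBoost, norm_eq_of_mem_sphere]

lemma continuous_mobius (v : E) : Continuous (mobius v) :=
  .subtype_mk (((continuous_boostFactor v).inv₀ fun ω ↦ (boostFactor_pos v ω).ne').smul
    ((continuous_coneBoost v).comp continuous_subtype_val)) _

lemma boostFactor_mul_smul_mobius_neg_mobius (v : E) (ω : sphere (0 : E) 1) :
    (boostFactor v ω * boostFactor (-v) (mobius v ω)) • (mobius (-v) (mobius v ω) : E) = ω := by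
  rw [mul_smul, boostFactor_smul_mobius, ← coneBoost_smul _ (boostFactor_pos v ω),
    boostFactor_smul_mobius, coneBoost_neg_coneBoost]

lemma boostFactor_mul_boostFactor_neg (v : E) (ω : sphere (0 : E) 1) :
    boostFactor v ω * boostFactor (-v) (mobius v ω) = 1 := by
  have h := congrArg norm (boostFactor_mul_smul_mobius_neg_mobius v ω)
  have hpos := mul_pos (boostFactor_pos v ω) (boostFactor_pos (-v) (mobius v ω))
  rwa [norm_smul, norm_eq_of_mem_sphere, norm_eq_of_mem_sphere, Real.norm_of_nonneg hpos.le,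
    mul_one] at h

lemma mobius_neg_mobius (v : E) (ω : sphere (0 : E) 1) : mobius (-v) (mobius v ω) = ω := by
  have h := boostFactor_mul_smul_mobius_neg_mobius v ω
  rw [boostFactor_mul_boostFactor_neg, one_smul] at h
  exact Subtype.ext h

/-- `mobius v` as a homeomorphism, with inverse `mobius (-v)`. -/
noncomputable def mobiusHomeomorph (v : E) : sphere (0 : E) 1 ≃ₜ sphere (0 : E) 1 where
  toFun := mobius v
  invFun := mobius (-v)
  left_inv := mobius_neg_mobius v
  right_inv ω := by simpa only [neg_neg] using mobius_neg_mobius (-v) ω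
  continuous_toFun := continuous_mobius v
  continuous_invFun := continuous_mobius (-v)

lemma measurableEmbedding_mobius [MeasurableSpace E] [BorelSpace E] (v : E) :
    MeasurableEmbedding (mobius v) :=
  (mobiusHomeomorph v).measurableEmbedding

lemma dist_sq_eq_two_mul_one_sub_inner (ω ζ : sphere (0 : E) 1) :
    dist ω ζ ^ 2 = 2 * (1 - ⟪(ω : E), ζ⟫) := by
  rw [Subtype.dist_eq, dist_eq_norm, norm_sub_sq_real, norm_eq_of_mem_sphere,
    norm_eq_of_mem_sphere]
  ring

lemma boostFactor_mul_one_sub_inner_mobius (v : E) (ω ζ : sphere (0 : E) 1) :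
    boostFactor v ω * boostFactor v ζ * (1 - ⟪(mobius v ω : E), mobius v ζ⟫) =
      1 - ⟪(ω : E), ζ⟫ := by
  have h := boost_minkowski_inner v 1 1 (ω : E) ζ
  rw [boostSpace_one_coe, boostSpace_one_coe, real_inner_smul_left, real_inner_smul_right,
    ← boostFactor_eq_boostTime, ← boostFactor_eq_boostTime] at h
  linarith

lemma boostFactor_mul_dist_mobius_sq (v : E) (ω ζ : sphere (0 : E) 1) :
    boostFactor v ω * boostFactor v ζ * dist (mobius v ω) (mobius v ζ) ^ 2 = dist ω ζ ^ 2 := by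
  rw [dist_sq_eq_two_mul_one_sub_inner, dist_sq_eq_two_mul_one_sub_inner,
    ← boostFactor_mul_one_sub_inner_mobius v ω ζ]
  ring

lemma dist_rpow_eq_sq_rpow_half {X : Type*} [PseudoMetricSpace X] (x y : X) (s : ℝ) :
    dist x y ^ s = (dist x y ^ 2) ^ (s / 2) := by
  rw [← Real.rpow_natCast, ← Real.rpow_mul dist_nonneg, Nat.cast_ofNat,
    mul_div_cancel₀ s two_ne_zero]

lemma dist_rpow_eq_mul_dist_mobius_rpow (s : ℝ) (v : E) (ω ζ : sphere (0 : E) 1) :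
    dist ω ζ ^ s = boostFactor v ω ^ (s / 2) * boostFactor v ζ ^ (s / 2) *
      dist (mobius v ω) (mobius v ζ) ^ s := by
  have hω := boostFactor_pos v ω
  have hζ := boostFactor_pos v ζ
  rw [dist_rpow_eq_sq_rpow_half, ← boostFactor_mul_dist_mobius_sq v,
    Real.mul_rpow (by positivity) (by positivity), Real.mul_rpow hω.le hζ.le,
    ← dist_rpow_eq_sq_rpow_half]

lemma lorentzFactor_boostSpace (v w : E) :
    lorentzFactor (boostSpace v (lorentzFactor w) w) = boostTime v (lorentzFactor w) w := by
  have htime := boostTime_pos v (norm_lt_lorentzFactor w).le (lorentzFactor_pos w)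
  have h := boost_minkowski_inner v (lorentzFactor w) (lorentzFactor w) w w
  rw [real_inner_self_eq_lorentzFactor_sq_sub_one, real_inner_self_eq_lorentzFactor_sq_sub_one] at h
  exact (sq_eq_sq₀ (lorentzFactor_pos _).le htime.le).1 (by linarith)

-- The chain rule for boosts: `(lorentzFactor w, w)` is the four-velocity of the boost with
-- parameter `w`, and the boost with parameter `v` carries it to another four-velocity.
lemma boostFactor_eq_mul_boostFactor_mobius (v w : E) (ω : sphere (0 : E) 1) :
    boostFactor w ω =
      boostFactor v ω * boostFactor (boostSpace v (lorentzFactor w) w) (mobius v ω) := by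
  have h := boost_minkowski_inner v (lorentzFactor w) 1 w ω
  rw [boostSpace_one_coe, real_inner_smul_right, ← boostFactor_eq_boostTime] at h
  rw [boostFactor, boostFactor.eq_1 _ (mobius v ω), lorentzFactor_boostSpace, real_inner_comm,
    real_inner_comm _ (mobius v ω : E)]
  linarith

end MobiusTransformation

section SurfaceMeasure

variable {E : Type*} [NormedAddCommGroup E] [InnerProductSpace ℝ E] [FiniteDimensional ℝ E]
  [MeasurableSpace E] [BorelSpace E]

variable (E) in
/-- The surface measure on the unit sphere of a Euclidean space. -/
noncomputable abbrev surfaceMeasure : Measure (sphere (0 : E) 1) := (volume : Measure E).toSphere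

/-- The isometry of the unit sphere induced by a linear isometry. -/
def unitSphereIsometry (R : E ≃ₗᵢ[ℝ] E) : sphere (0 : E) 1 ≃ᵢ sphere (0 : E) 1 where
  toFun ω := ⟨R ω, by simp⟩
  invFun ω := ⟨R.symm ω, by simp⟩
  left_inv ω := by simp
  right_inv ω := by simp
  isometry_toFun := .of_dist_eq fun ω ζ ↦ R.dist_map ω ζ

lemma measurePreserving_unitSphereIsometry (R : E ≃ₗᵢ[ℝ] E) :
    MeasurePreserving (unitSphereIsometry R) (surfaceMeasure E) (surfaceMeasure E) := by
  have hmeas : Measurable (unitSphereIsometry R) := (unitSphereIsometry R).continuous.measurable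
  have hvol : MeasurePreserving R.toMeasurableEquiv := R.measurePreserving
  refine ⟨hmeas, Measure.ext fun s hs ↦ ?_⟩
  have hcone : Set.Ioo (0 : ℝ) 1 • ((↑) '' (unitSphereIsometry R ⁻¹' s) : Set E) =
      R ⁻¹' (Set.Ioo (0 : ℝ) 1 • ((↑) '' s)) := by
    ext x
    constructor
    · rintro ⟨r, hr, _, ⟨ω, hω, rfl⟩, rfl⟩
      exact ⟨r, hr, _, ⟨_, hω, rfl⟩, (R.map_smul r ω).symm⟩
    · rintro ⟨r, hr, _, ⟨ω, hω, rfl⟩, hx⟩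
      refine ⟨r, hr, _, ⟨(unitSphereIsometry R).symm ω, by simpa using hω, rfl⟩, R.injective ?_⟩
      exact (R.map_smul r _).trans ((congrArg (r • ·) (R.apply_symm_apply ω)).trans hx)
  rw [Measure.map_apply hmeas hs, Measure.toSphere_apply' _ (hmeas hs),
    Measure.toSphere_apply' _ hs, hcone]
  exact congrArg _ (hvol.measure_preimage_equiv _)

lemma map_mobius_withDensity [Nontrivial E] (v : E) :
    ((surfaceMeasure E).withDensity fun ω ↦
      ENNReal.ofReal (boostFactor v ω ^ (1 - finrank ℝ E : ℝ))).map (mobius v) =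
      surfaceMeasure E := by
  simpa only [norm_coneBoost_coe] using map_withDensity_toSphere_of_homogeneous volume
    (continuous_coneBoost v).measurable (continuous_mobius v).measurable
    (fun r hr x ↦ coneBoost_smul v hr x)
    (fun ω ↦ (norm_coneBoost_coe v ω).symm ▸ boostFactor_pos v ω)
    (fun ω ↦ by rw [norm_coneBoost_coe, boostFactor_smul_mobius]) (map_coneBoost_withDensity _ v)

omit [FiniteDimensional ℝ E] in
lemma measurable_boostFactor_density (v : E) :
    Measurable fun ω ↦ ENNReal.ofReal (boostFactor v ω ^ (1 - finrank ℝ E : ℝ)) :=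
  (continuous_boostFactor_rpow v _).measurable.ennreal_ofReal

lemma integral_comp_mobius_mul_boostFactor [Nontrivial E] (v : E) (f : sphere (0 : E) 1 → ℝ) :
    ∫ ω, f (mobius v ω) * boostFactor v ω ^ (1 - finrank ℝ E : ℝ) ∂(surfaceMeasure E) =
      ∫ ω, f ω ∂(surfaceMeasure E) := by
  conv_rhs => rw [← map_mobius_withDensity v, (measurableEmbedding_mobius v).integral_map,
    integral_withDensity_eq_integral_toReal_smul (measurable_boostFactor_density v)
      (.of_forall fun _ ↦ ofReal_lt_top)]
  refine integral_congr_ae (.of_forall fun ω ↦ ?_)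
  have := boostFactor_pos v ω
  simp only [smul_eq_mul]
  rw [toReal_ofReal (by positivity), mul_comm]

lemma integrable_comp_mobius_mul_boostFactor_iff [Nontrivial E] (v : E)
    {f : sphere (0 : E) 1 → ℝ} :
    Integrable (fun ω ↦ f (mobius v ω) * boostFactor v ω ^ (1 - finrank ℝ E : ℝ))
      (surfaceMeasure E) ↔ Integrable f (surfaceMeasure E) := by
  conv_rhs => rw [← map_mobius_withDensity v, (measurableEmbedding_mobius v).integrable_map_iff,
    integrable_withDensity_iff_integrable_smul' (measurable_boostFactor_density v)
      (.of_forall fun _ ↦ ofReal_lt_top)]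
  refine integrable_congr (.of_forall fun ω ↦ ?_)
  have := boostFactor_pos v ω
  simp only [smul_eq_mul, Function.comp]
  rw [toReal_ofReal (by positivity), mul_comm]

lemma ae_of_ae_comp_mobius [Nontrivial E] (v : E) {P : sphere (0 : E) 1 → Prop}
    (h : ∀ᵐ ω ∂(surfaceMeasure E), P (mobius v ω)) : ∀ᵐ ω ∂(surfaceMeasure E), P ω := by
  rw [← map_mobius_withDensity v, (measurableEmbedding_mobius v).ae_map_iff]
  exact (withDensity_absolutelyContinuous _ _).ae_le h

end SurfaceMeasure

section ReverseHolder

/-- Conjugate exponents `0 < p < 1` and `q < 0` of the reversed Hölder inequality. -/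
structure ReverseHolderConjugate (p q : ℝ) : Prop where
  pos : 0 < p
  lt_one : p < 1
  inv_add_inv : p⁻¹ + q⁻¹ = 1

namespace ReverseHolderConjugate

variable {p q : ℝ} (h : ReverseHolderConjugate p q)

include h

lemma one_lt_inv : 1 < p⁻¹ := (one_lt_inv₀ h.pos).2 h.lt_one

lemma neg : q < 0 := inv_lt_zero.1 (by linarith [h.inv_add_inv, h.one_lt_inv])

lemma mul_inv_eq_sub_one : q * p⁻¹ = q - 1 := by
  rw [eq_sub_of_add_eq h.inv_add_inv, mul_sub, mul_one, mul_inv_cancel₀ h.neg.ne]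

lemma sub_one_mul : (q - 1) * p = q := by
  rw [← h.mul_inv_eq_sub_one, inv_mul_cancel_right₀ h.pos.ne']

lemma inv_mul_rpow_add_inv_mul_rpow (x : ℝ) {y : ℝ} (hy : 0 < y) :
    p⁻¹ * x ^ p + q⁻¹ * y ^ q = (1 + p⁻¹ * (x ^ p / y ^ q - 1)) * y ^ q := by
  have := Real.rpow_pos_of_pos hy q
  rw [eq_sub_of_add_eq' h.inv_add_inv]
  field

lemma mul_eq_rpow_div_rpow_mul {x y : ℝ} (hx : 0 ≤ x) (hy : 0 < y) :
    x * y = (x ^ p / y ^ q) ^ p⁻¹ * y ^ q := by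
  rw [Real.div_rpow (by positivity) (by positivity), Real.rpow_rpow_inv hx h.pos.ne',
    ← Real.rpow_mul hy.le, h.mul_inv_eq_sub_one, Real.rpow_sub_one hy.ne']
  have := Real.rpow_pos_of_pos hy q
  field

lemma young_le {x y : ℝ} (hx : 0 ≤ x) (hy : 0 < y) : p⁻¹ * x ^ p + q⁻¹ * y ^ q ≤ x * y := by
  have hratio : -1 ≤ x ^ p / y ^ q - 1 := by linarith [show 0 ≤ x ^ p / y ^ q by positivity]
  rw [h.inv_mul_rpow_add_inv_mul_rpow x hy, h.mul_eq_rpow_div_rpow_mul hx hy]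
  gcongr
  simpa using one_add_mul_self_le_rpow_one_add hratio h.one_lt_inv.le

lemma young_lt {x y : ℝ} (hx : 0 ≤ x) (hy : 0 < y) (hne : x ^ p ≠ y ^ q) :
    p⁻¹ * x ^ p + q⁻¹ * y ^ q < x * y := by
  have hyq : 0 < y ^ q := Real.rpow_pos_of_pos hy q
  have hratio : -1 ≤ x ^ p / y ^ q - 1 := by linarith [show 0 ≤ x ^ p / y ^ q by positivity]
  have hratio_ne : x ^ p / y ^ q - 1 ≠ 0 := by rwa [Ne, sub_eq_zero, div_eq_one_iff_eq hyq.ne']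
  rw [h.inv_mul_rpow_add_inv_mul_rpow x hy, h.mul_eq_rpow_div_rpow_mul hx hy]
  gcongr
  simpa using one_add_mul_self_lt_rpow_one_add hratio hratio_ne h.one_lt_inv

end ReverseHolderConjugate

variable {X : Type*} [MeasurableSpace X] {μ : Measure X}

variable (μ) in
/-- The `L^r` functional of a real exponent `r`, a norm only for `1 ≤ r`; here it is used for
`r < 1`, including negative exponents. -/
noncomputable def lpQuasinorm (r : ℝ) (F : X → ℝ) : ℝ := (∫ x, |F x| ^ r ∂μ) ^ (1 / r)

lemma lpQuasinorm_of_nonneg {F : X → ℝ} (hF : ∀ x, 0 ≤ F x) (r : ℝ) :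
    lpQuasinorm μ r F = (∫ x, F x ^ r ∂μ) ^ (1 / r) := by
  simp only [lpQuasinorm, abs_of_nonneg (hF _)]

lemma lpQuasinorm_congr {F G : X → ℝ} (h : F =ᵐ[μ] G) (r : ℝ) :
    lpQuasinorm μ r F = lpQuasinorm μ r G := by
  exact congrArg (· ^ (1 / r)) (integral_congr_ae (h.fun_comp fun t ↦ |t| ^ r))

lemma lpQuasinorm_const_mul {r : ℝ} (hr : r ≠ 0) (c : ℝ) (F : X → ℝ) :
    lpQuasinorm μ r (fun x ↦ c * F x) = |c| * lpQuasinorm μ r F := by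
  simp only [lpQuasinorm, abs_mul, Real.mul_rpow (abs_nonneg _) (abs_nonneg _)]
  rw [integral_const_mul, Real.mul_rpow (by positivity) (integral_nonneg fun x ↦ by positivity),
    one_div, Real.rpow_rpow_inv (abs_nonneg c) hr]

lemma lpQuasinorm_pos {F : X → ℝ} (hF : ∀ x, 0 ≤ F x) {r : ℝ} (h : 0 < ∫ x, F x ^ r ∂μ) :
    0 < lpQuasinorm μ r F := by
  rw [lpQuasinorm_of_nonneg hF]
  exact Real.rpow_pos_of_pos h _

lemma lpQuasinorm_rpow {F : X → ℝ} (hF : ∀ x, 0 ≤ F x) {r : ℝ} (hr : r ≠ 0) :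
    lpQuasinorm μ r F ^ r = ∫ x, F x ^ r ∂μ := by
  rw [lpQuasinorm_of_nonneg hF, one_div,
    Real.rpow_inv_rpow (integral_nonneg fun x ↦ Real.rpow_nonneg (hF x) r) hr]

lemma integral_inv_lpQuasinorm_mul_rpow {F : X → ℝ} (hF : ∀ x, 0 ≤ F x) {r : ℝ} (hr : r ≠ 0)
    (h : 0 < ∫ x, F x ^ r ∂μ) : ∫ x, ((lpQuasinorm μ r F)⁻¹ * F x) ^ r ∂μ = 1 := by
  have hpos := lpQuasinorm_pos hF h
  simp only [Real.mul_rpow (inv_pos.2 hpos).le (hF _)]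
  rw [integral_const_mul, Real.inv_rpow hpos.le, lpQuasinorm_rpow hF hr, inv_mul_cancel₀ h.ne']

namespace ReverseHolderConjugate

variable {p q : ℝ} (h : ReverseHolderConjugate p q) {F g : X → ℝ} (hF : ∀ x, 0 ≤ F x)
  (hg : ∀ x, 0 < g x) (hFp : Integrable (fun x ↦ F x ^ p) μ)
  (hgq : Integrable (fun x ↦ g x ^ q) μ) (hFg : Integrable (fun x ↦ F x * g x) μ)

include h hF hg hFp hgq hFg

lemma integral_young_le :
    p⁻¹ * ∫ x, F x ^ p ∂μ + q⁻¹ * ∫ x, g x ^ q ∂μ ≤ ∫ x, F x * g x ∂μ := by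
  rw [← integral_const_mul, ← integral_const_mul,
    ← integral_add (hFp.const_mul _) (hgq.const_mul _)]
  exact integral_mono ((hFp.const_mul _).add (hgq.const_mul _)) hFg
    fun x ↦ h.young_le (hF x) (hg x)

lemma ae_rpow_eq_rpow_of_integral_young_eq
    (heq : p⁻¹ * ∫ x, F x ^ p ∂μ + q⁻¹ * ∫ x, g x ^ q ∂μ = ∫ x, F x * g x ∂μ) :
    ∀ᵐ x ∂μ, F x ^ p = g x ^ q := by
  rw [← integral_const_mul, ← integral_const_mul,
    ← integral_add (hFp.const_mul _) (hgq.const_mul _)] at heq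
  have hae := (integral_eq_iff_of_ae_le ((hFp.const_mul _).add (hgq.const_mul _)) hFg
    (.of_forall fun x ↦ h.young_le (hF x) (hg x))).1 heq
  filter_upwards [hae] with x hx
  by_contra hne
  exact (h.young_lt (hF x) (hg x) hne).ne hx

variable (hFpos : 0 < ∫ x, F x ^ p ∂μ) (hgpos : 0 < ∫ x, g x ^ q ∂μ)

include hFpos hgpos

lemma lpQuasinorm_mul_lpQuasinorm_le :
    lpQuasinorm μ p F * lpQuasinorm μ q g ≤ ∫ x, F x * g x ∂μ := by
  have hgnonneg x := (hg x).le
  have ha := inv_pos.2 (lpQuasinorm_pos hF hFpos)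
  have hb := inv_pos.2 (lpQuasinorm_pos hgnonneg hgpos)
  have hyoung := h.integral_young_le (fun x ↦ mul_nonneg ha.le (hF x))
    (fun x ↦ mul_pos hb (hg x)) (by simpa only [Real.mul_rpow ha.le (hF _)] using hFp.const_mul _)
    (by simpa only [Real.mul_rpow hb.le (hgnonneg _)] using hgq.const_mul _)
    (by simpa only [mul_mul_mul_comm _ (F _)] using hFg.const_mul _)
  simp only [mul_mul_mul_comm _ (F _)] at hyoung
  rw [integral_inv_lpQuasinorm_mul_rpow hF h.pos.ne' hFpos,
    integral_inv_lpQuasinorm_mul_rpow hgnonneg h.neg.ne hgpos, mul_one, mul_one, h.inv_add_inv,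
    integral_const_mul, ← mul_inv] at hyoung
  rwa [← one_le_inv_mul₀ (mul_pos (inv_pos.1 ha) (inv_pos.1 hb))]

lemma exists_ae_eq_const_mul_rpow_of_lpQuasinorm_mul_eq
    (heq : lpQuasinorm μ p F * lpQuasinorm μ q g = ∫ x, F x * g x ∂μ) :
    ∃ c, 0 < c ∧ ∀ᵐ x ∂μ, F x = c * g x ^ (q - 1) := by
  have hgnonneg x := (hg x).le
  have ha := inv_pos.2 (lpQuasinorm_pos hF hFpos)
  have hb := inv_pos.2 (lpQuasinorm_pos hgnonneg hgpos)
  have hae := h.ae_rpow_eq_rpow_of_integral_young_eq (fun x ↦ mul_nonneg ha.le (hF x))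
    (fun x ↦ mul_pos hb (hg x)) (by simpa only [Real.mul_rpow ha.le (hF _)] using hFp.const_mul _)
    (by simpa only [Real.mul_rpow hb.le (hgnonneg _)] using hgq.const_mul _)
    (by simpa only [mul_mul_mul_comm _ (F _)] using hFg.const_mul _)
    (by
      simp only [mul_mul_mul_comm _ (F _)]
      rw [integral_inv_lpQuasinorm_mul_rpow hF h.pos.ne' hFpos,
        integral_inv_lpQuasinorm_mul_rpow hgnonneg h.neg.ne hgpos, mul_one, mul_one,
        h.inv_add_inv, integral_const_mul, ← mul_inv, ← heq, inv_mul_cancel₀]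
      exact (mul_pos (inv_pos.1 ha) (inv_pos.1 hb)).ne')
  refine ⟨lpQuasinorm μ p F * (lpQuasinorm μ q g)⁻¹ ^ (q - 1),
    mul_pos (inv_pos.1 ha) (Real.rpow_pos_of_pos hb _), ?_⟩
  filter_upwards [hae] with x hx
  rw [mul_assoc, ← Real.mul_rpow hb.le (hgnonneg x), ← h.mul_inv_eq_sub_one,
    Real.rpow_mul (mul_pos hb (hg x)).le, ← hx, Real.rpow_rpow_inv (mul_nonneg ha.le (hF x))
    h.pos.ne', mul_inv_cancel_left₀ (inv_pos.1 ha).ne']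

end ReverseHolderConjugate

end ReverseHolder

section AdmissibleFunctions

variable {X : Type*} [MeasurableSpace X] {μ : Measure X}

/-- The competitors of the variational problem: nonnegative integrable functions of positive
mass. Nonnegativity is required everywhere, so that powers and potentials need no exceptional
sets. -/
structure Admissible (μ : Measure X) (F : X → ℝ) : Prop where
  integrable : Integrable F μ
  nonneg : ∀ x, 0 ≤ F x
  integral_pos : 0 < ∫ x, F x ∂μ

namespace Admissible

variable {F : X → ℝ}

lemma integral_mul_pos (hF : Admissible μ F) {K : X → ℝ} (hK : ∀ᵐ x ∂μ, 0 < K x)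
    (hFK : Integrable (fun x ↦ F x * K x) μ) : 0 < ∫ x, F x * K x ∂μ := by
  have hnonneg : 0 ≤ᵐ[μ] fun x ↦ F x * K x := by
    filter_upwards [hK] with x hx using mul_nonneg (hF.nonneg x) hx.le
  refine (integral_nonneg_of_ae hnonneg).lt_of_ne' fun hzero ↦ hF.integral_pos.ne' ?_
  refine integral_eq_zero_of_ae ?_
  filter_upwards [(integral_eq_zero_iff_of_nonneg_ae hnonneg hFK).1 hzero, hK] with x hx hKx
  exact (mul_eq_zero.1 hx).resolve_right hKx.ne'

lemma of_not_ae_eq_zero (hF : Integrable F μ) (hnonneg : ∀ x, 0 ≤ F x) (hne : ¬ F =ᵐ[μ] 0) :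
    Admissible μ F :=
  ⟨hF, hnonneg, (integral_nonneg hnonneg).lt_of_ne' fun hzero ↦
    hne ((integral_eq_zero_iff_of_nonneg hnonneg hF).1 hzero)⟩

lemma const_mul (hF : Admissible μ F) {c : ℝ} (hc : 0 < c) : Admissible μ fun x ↦ c * F x where
  integrable := hF.integrable.const_mul c
  nonneg x := mul_nonneg hc.le (hF.nonneg x)
  integral_pos := by
    rw [integral_const_mul]
    exact mul_pos hc hF.integral_pos

lemma integrable_rpow [IsFiniteMeasure μ] (hF : Admissible μ F) {p : ℝ} (hp : 0 ≤ p)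
    (hp' : p ≤ 1) : Integrable (fun x ↦ F x ^ p) μ := by
  refine ((integrable_const (1 : ℝ)).add hF.integrable).mono'
    (hF.integrable.aestronglyMeasurable.aemeasurable.pow_const p).aestronglyMeasurable
    (.of_forall fun x ↦ ?_)
  have hx := hF.nonneg x
  have hbernoulli := rpow_one_add_le_one_add_mul_self (s := F x - 1) (by linarith) hp hp'
  rw [Real.norm_of_nonneg (by positivity)]
  simp only [Pi.add_apply]
  rw [add_sub_cancel] at hbernoulli
  nlinarith

lemma integral_rpow_pos [IsFiniteMeasure μ] (hF : Admissible μ F) {p : ℝ} (hp : 0 < p)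
    (hp' : p ≤ 1) : 0 < ∫ x, F x ^ p ∂μ := by
  have hnonneg x : 0 ≤ F x ^ p := Real.rpow_nonneg (hF.nonneg x) p
  refine (integral_nonneg hnonneg).lt_of_ne' fun hzero ↦ hF.integral_pos.ne' ?_
  refine integral_eq_zero_of_ae ?_
  filter_upwards [(integral_eq_zero_iff_of_nonneg hnonneg
    (hF.integrable_rpow hp.le hp')).1 hzero] with x hx
  exact (Real.rpow_eq_zero (hF.nonneg x) hp.ne').1 hx

lemma lpQuasinorm_pos [IsFiniteMeasure μ] {p q : ℝ} (h : ReverseHolderConjugate p q)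
    (hF : Admissible μ F) : 0 < lpQuasinorm μ p F :=
  _root_.lpQuasinorm_pos hF.nonneg (hF.integral_rpow_pos h.pos h.lt_one.le)

end Admissible

end AdmissibleFunctions

section CompactSpace

variable {X : Type*} [TopologicalSpace X] [CompactSpace X] [MeasurableSpace X]
  [OpensMeasurableSpace X] {μ : Measure X}

lemma integrable_mul_of_continuous [T2Space X] {F K : X → ℝ} (hF : Integrable F μ)
    (hK : Continuous K) :
    Integrable (fun x ↦ F x * K x) μ :=
  integrableOn_univ.1 (hF.integrableOn.mul_continuousOn hK.continuousOn isCompact_univ)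

lemma continuous_integral_mul_of_continuous {Y : Type*} [TopologicalSpace Y] {F : X → ℝ}
    (hF : Integrable F μ) {K : Y × X → ℝ} (hK : Continuous K) :
    Continuous fun y ↦ ∫ x, F x * K (y, x) ∂μ := by
  rw [← continuousOn_univ]
  exact continuousOn_integral_bilinear_of_locally_integrable_of_compact_support
    (ContinuousLinearMap.mul ℝ ℝ) (f := fun y x ↦ K (y, x)) isCompact_univ hK.continuousOn
    (fun _ x _ hx ↦ absurd (Set.mem_univ x) hx) hF.integrableOn

variable [IsFiniteMeasure μ]

lemma integrable_of_continuous {f : X → ℝ} (hf : Continuous f) : Integrable f μ :=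
  hf.integrable_of_hasCompactSupport (.of_compactSpace f)

lemma continuous_integral_of_continuous {Y : Type*} [TopologicalSpace Y] {K : Y × X → ℝ}
    (hK : Continuous K) : Continuous fun y ↦ ∫ x, K (y, x) ∂μ := by
  simpa only [one_mul] using continuous_integral_mul_of_continuous (integrable_const (1 : ℝ)) hK

lemma integral_pos_of_continuous [NeZero μ] {f : X → ℝ} (hf : Continuous f)
    (hpos : ∀ x, 0 < f x) : 0 < ∫ x, f x ∂μ := by
  have hsupport : Function.support f = Set.univ :=
    Function.support_eq_univ fun x ↦ (hpos x).ne'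
  rw [integral_pos_iff_support_of_nonneg (fun x ↦ (hpos x).le) (integrable_of_continuous hf),
    hsupport]
  exact Measure.measure_univ_pos.2 (NeZero.ne μ)

lemma Admissible.of_continuous [NeZero μ] {f : X → ℝ} (hf : Continuous f)
    (hpos : ∀ x, 0 < f x) : Admissible μ f :=
  ⟨integrable_of_continuous hf, fun x ↦ (hpos x).le, integral_pos_of_continuous hf hpos⟩

end CompactSpace

section RieszPotential

variable {X : Type*} [MetricSpace X] [MeasurableSpace X] {μ : Measure X} {s : ℝ} {F G : X → ℝ}

omit [MeasurableSpace X] in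
lemma continuous_dist_rpow (hs : 0 ≤ s) : Continuous fun z : X × X ↦ dist z.1 z.2 ^ s :=
  continuous_dist.rpow_const fun _ ↦ .inr hs

/-- The Riesz potential with kernel `dist x y ^ s`; the operator `Ĩ_α` is the case `s = α - n` on
the unit sphere. -/
noncomputable def rieszPotential (μ : Measure X) (s : ℝ) (F : X → ℝ) (x : X) : ℝ :=
  ∫ y, F y * dist x y ^ s ∂μ

/-- The mutual energy of `F` and `G` for the kernel `dist x y ^ s`. -/
noncomputable def rieszEnergy (μ : Measure X) (s : ℝ) (F G : X → ℝ) : ℝ :=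
  ∫ x, F x * rieszPotential μ s G x ∂μ

lemma rieszPotential_congr (h : F =ᵐ[μ] G) (x : X) :
    rieszPotential μ s F x = rieszPotential μ s G x :=
  integral_congr_ae (h.mul .rfl)

lemma rieszPotential_const_mul (c : ℝ) (F : X → ℝ) (x : X) :
    rieszPotential μ s (fun y ↦ c * F y) x = c * rieszPotential μ s F x := by
  simp only [rieszPotential, mul_assoc, integral_const_mul]

lemma rieszPotential_nonneg (hF : ∀ x, 0 ≤ F x) (x : X) : 0 ≤ rieszPotential μ s F x :=
  integral_nonneg fun y ↦ mul_nonneg (hF y) (by positivity)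

lemma rieszPotential_comp_isometry [BorelSpace X] {ρ : X ≃ᵢ X} (hρ : MeasurePreserving ρ μ μ)
    (F : X → ℝ) (x : X) :
    rieszPotential μ s (fun y ↦ F (ρ y)) x = rieszPotential μ s F (ρ x) := by
  rw [rieszPotential, rieszPotential]
  conv_rhs => rw [← hρ.integral_comp ρ.toHomeomorph.measurableEmbedding]
  exact integral_congr_ae (.of_forall fun y ↦ congrArg (F (ρ y) * · ^ s) (ρ.dist_eq x y).symm)

variable [CompactSpace X] [BorelSpace X]

lemma integrable_mul_dist_rpow (hs : 0 ≤ s) (hF : Integrable F μ) (x : X) :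
    Integrable (fun y ↦ F y * dist x y ^ s) μ :=
  integrable_mul_of_continuous hF ((continuous_dist_rpow hs).comp (.prodMk_right x))

lemma continuous_rieszPotential (hs : 0 ≤ s) (hF : Integrable F μ) :
    Continuous (rieszPotential μ s F) :=
  continuous_integral_mul_of_continuous hF (continuous_dist_rpow hs)

lemma integrable_mul_rieszPotential (hs : 0 ≤ s) (hF : Integrable F μ) (hG : Integrable G μ) :
    Integrable (fun x ↦ F x * rieszPotential μ s G x) μ :=
  integrable_mul_of_continuous hF (continuous_rieszPotential hs hG)

lemma Admissible.rieszPotential_pos [NullSingletonClass μ] (hs : 0 ≤ s) (hF : Admissible μ F)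
    (x : X) : 0 < rieszPotential μ s F x := by
  refine hF.integral_mul_pos ?_ (integrable_mul_dist_rpow hs hF.integrable x)
  filter_upwards [ae_iff.2 (by simp : μ {y | ¬ y ≠ x} = 0)] with y hy
  exact Real.rpow_pos_of_pos (dist_pos.2 hy.symm) s

lemma Admissible.continuous_rieszPotential_rpow [NullSingletonClass μ] (hs : 0 ≤ s)
    (hF : Admissible μ F) (r : ℝ) : Continuous fun x ↦ rieszPotential μ s F x ^ r :=
  (continuous_rieszPotential hs hF.integrable).rpow_const
    fun x ↦ .inl (hF.rieszPotential_pos hs x).ne'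

lemma integrable_prod_mul_dist_rpow (hs : 0 ≤ s) (hF : Integrable F μ) (hG : Integrable G μ) :
    Integrable (fun z : X × X ↦ F z.1 * G z.2 * dist z.1 z.2 ^ s) (μ.prod μ) :=
  integrable_mul_of_continuous (hF.mul_prod hG) (continuous_dist_rpow hs)

lemma rieszEnergy_eq_integral_prod [SFinite μ] (hs : 0 ≤ s) (hF : Integrable F μ)
    (hG : Integrable G μ) :
    rieszEnergy μ s F G = ∫ z, F z.1 * G z.2 * dist z.1 z.2 ^ s ∂μ.prod μ := by
  rw [integral_prod _ (integrable_prod_mul_dist_rpow hs hF hG)]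
  simp only [rieszEnergy, rieszPotential, mul_assoc, integral_const_mul]

lemma rieszEnergy_comm [SFinite μ] (hs : 0 ≤ s) (hF : Integrable F μ) (hG : Integrable G μ) :
    rieszEnergy μ s F G = rieszEnergy μ s G F := by
  rw [rieszEnergy_eq_integral_prod hs hF hG, rieszEnergy_eq_integral_prod hs hG hF,
    ← integral_prod_swap]
  simp only [Prod.fst_swap, Prod.snd_swap, dist_comm, mul_comm]

end RieszPotential

section RieszQuotient

variable {X : Type*} [MetricSpace X] [MeasurableSpace X] {μ : Measure X} {s p q : ℝ}
  {F G : X → ℝ}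

/-- The quotient minimised in the reversed Hardy–Littlewood–Sobolev inequality. -/
noncomputable def rieszQuotient (μ : Measure X) (s p q : ℝ) (F : X → ℝ) : ℝ :=
  lpQuasinorm μ q (rieszPotential μ s F) / lpQuasinorm μ p F

/-- The function that is the equality case of the reversed Hölder inequality against the potential
of `F`. -/
noncomputable def dualFunction (μ : Measure X) (s q : ℝ) (F : X → ℝ) (x : X) : ℝ :=
  rieszPotential μ s F x ^ (q - 1)

lemma rieszQuotient_congr (h : F =ᵐ[μ] G) : rieszQuotient μ s p q F = rieszQuotient μ s p q G := by
  rw [rieszQuotient, rieszQuotient, lpQuasinorm_congr h,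
    funext (rieszPotential_congr (s := s) h)]

lemma rieszQuotient_const_mul (h : ReverseHolderConjugate p q) {c : ℝ} (hc : c ≠ 0) (F : X → ℝ) :
    rieszQuotient μ s p q (fun x ↦ c * F x) = rieszQuotient μ s p q F := by
  rw [rieszQuotient, funext (rieszPotential_const_mul c F), lpQuasinorm_const_mul h.neg.ne,
    lpQuasinorm_const_mul h.pos.ne', mul_div_mul_left _ _ (abs_ne_zero.2 hc), rieszQuotient]

/-- A minimiser of the quotient among admissible functions. -/
def IsRieszMinimizer (μ : Measure X) (s p q : ℝ) (F : X → ℝ) : Prop :=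
  Admissible μ F ∧ ∀ G, Admissible μ G → rieszQuotient μ s p q F ≤ rieszQuotient μ s p q G

variable [CompactSpace X] [BorelSpace X] [NullSingletonClass μ]

lemma Admissible.continuous_dualFunction (hs : 0 ≤ s) (hF : Admissible μ F) :
    Continuous (dualFunction μ s q F) :=
  hF.continuous_rieszPotential_rpow hs (q - 1)

lemma Admissible.dualFunction_pos (hs : 0 ≤ s) (hF : Admissible μ F) (x : X) :
    0 < dualFunction μ s q F x :=
  Real.rpow_pos_of_pos (hF.rieszPotential_pos hs x) _

variable [IsFiniteMeasure μ] [NeZero μ]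

lemma Admissible.integral_rieszPotential_rpow_pos (hs : 0 ≤ s) (hF : Admissible μ F) (r : ℝ) :
    0 < ∫ x, rieszPotential μ s F x ^ r ∂μ :=
  integral_pos_of_continuous (hF.continuous_rieszPotential_rpow hs r)
    fun x ↦ Real.rpow_pos_of_pos (hF.rieszPotential_pos hs x) r

lemma Admissible.lpQuasinorm_rieszPotential_pos (hs : 0 ≤ s) (hF : Admissible μ F) :
    0 < lpQuasinorm μ q (rieszPotential μ s F) :=
  _root_.lpQuasinorm_pos (rieszPotential_nonneg hF.nonneg)
    (hF.integral_rieszPotential_rpow_pos hs q)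

lemma Admissible.rieszQuotient_pos (h : ReverseHolderConjugate p q) (hs : 0 ≤ s)
    (hF : Admissible μ F) : 0 < rieszQuotient μ s p q F :=
  div_pos (hF.lpQuasinorm_rieszPotential_pos hs) (hF.lpQuasinorm_pos h)

lemma Admissible.admissible_dualFunction (hs : 0 ≤ s) (hF : Admissible μ F) :
    Admissible μ (dualFunction μ s q F) :=
  .of_continuous (hF.continuous_dualFunction hs) (hF.dualFunction_pos hs)

lemma lpQuasinorm_mul_le_rieszEnergy (h : ReverseHolderConjugate p q) (hs : 0 ≤ s)
    (hF : Admissible μ F) (hG : Admissible μ G) :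
    lpQuasinorm μ p F * lpQuasinorm μ q (rieszPotential μ s G) ≤ rieszEnergy μ s F G :=
  h.lpQuasinorm_mul_lpQuasinorm_le hF.nonneg (hG.rieszPotential_pos hs)
    (hF.integrable_rpow h.pos.le h.lt_one.le)
    (integrable_of_continuous (hG.continuous_rieszPotential_rpow hs q))
    (integrable_mul_rieszPotential hs hF.integrable hG.integrable)
    (hF.integral_rpow_pos h.pos h.lt_one.le)
    (hG.integral_rieszPotential_rpow_pos hs q)

lemma exists_ae_eq_const_mul_dualFunction (h : ReverseHolderConjugate p q) (hs : 0 ≤ s)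
    (hF : Admissible μ F) (hG : Admissible μ G)
    (heq : lpQuasinorm μ p F * lpQuasinorm μ q (rieszPotential μ s G) = rieszEnergy μ s F G) :
    ∃ c, 0 < c ∧ F =ᵐ[μ] fun x ↦ c * dualFunction μ s q G x :=
  h.exists_ae_eq_const_mul_rpow_of_lpQuasinorm_mul_eq hF.nonneg (hG.rieszPotential_pos hs)
    (hF.integrable_rpow h.pos.le h.lt_one.le)
    (integrable_of_continuous (hG.continuous_rieszPotential_rpow hs q))
    (integrable_mul_rieszPotential hs hF.integrable hG.integrable)
    (hF.integral_rpow_pos h.pos h.lt_one.le)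
    (hG.integral_rieszPotential_rpow_pos hs q) heq

lemma rieszEnergy_dualFunction (h : ReverseHolderConjugate p q) (hs : 0 ≤ s)
    (hF : Admissible μ F) :
    rieszEnergy μ s F (dualFunction μ s q F) =
      lpQuasinorm μ q (rieszPotential μ s F) * lpQuasinorm μ p (dualFunction μ s q F) := by
  have hmul x : dualFunction μ s q F x * rieszPotential μ s F x = rieszPotential μ s F x ^ q := by
    rw [dualFunction, ← Real.rpow_add_one (hF.rieszPotential_pos hs x).ne', sub_add_cancel]
  have hpow x : dualFunction μ s q F x ^ p = rieszPotential μ s F x ^ q := by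
    rw [dualFunction, ← Real.rpow_mul (hF.rieszPotential_pos hs x).le, h.sub_one_mul]
  have hdual := hF.admissible_dualFunction (q := q) hs
  rw [rieszEnergy_comm hs hF.integrable hdual.integrable,
    lpQuasinorm_of_nonneg (rieszPotential_nonneg hF.nonneg),
    lpQuasinorm_of_nonneg hdual.nonneg]
  simp only [rieszEnergy, hmul, hpow]
  rw [← Real.rpow_add (hF.integral_rieszPotential_rpow_pos hs q), one_div, one_div, add_comm,
    h.inv_add_inv, Real.rpow_one]

lemma rieszQuotient_dualFunction_le (h : ReverseHolderConjugate p q) (hs : 0 ≤ s)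
    (hF : Admissible μ F) :
    rieszQuotient μ s p q (dualFunction μ s q F) ≤ rieszQuotient μ s p q F := by
  have hdual := hF.admissible_dualFunction (q := q) hs
  have hle := lpQuasinorm_mul_le_rieszEnergy h hs hF hdual
  rw [rieszEnergy_dualFunction h hs hF, mul_comm] at hle
  exact (div_le_div_iff₀ (hdual.lpQuasinorm_pos h) (hF.lpQuasinorm_pos h)).2 hle

lemma IsRieszMinimizer.exists_ae_eq_const_mul_dualFunction_dualFunction
    (h : ReverseHolderConjugate p q) (hs : 0 ≤ s) (hF : IsRieszMinimizer μ s p q F) :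
    ∃ c, 0 < c ∧ F =ᵐ[μ] fun x ↦ c * dualFunction μ s q (dualFunction μ s q F) x := by
  have hdual := hF.1.admissible_dualFunction (q := q) hs
  refine exists_ae_eq_const_mul_dualFunction h hs hF.1 hdual
    ((lpQuasinorm_mul_le_rieszEnergy h hs hF.1 hdual).antisymm ?_)
  have hle := (div_le_div_iff₀ (hF.1.lpQuasinorm_pos h) (hdual.lpQuasinorm_pos h)).1
    (hF.2 _ hdual)
  rwa [rieszEnergy_dualFunction h hs hF.1, mul_comm (lpQuasinorm μ p F)]

end RieszQuotient

section Existence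

variable {X : Type*}

lemma isCompact_setOf_mem_Icc_and_dist_le [TopologicalSpace X] [CompactSpace X] {Y : Type*}
    [PseudoMetricSpace Y] (k : C(X, Y)) (a b : ℝ) :
    IsCompact {u : C(X, ℝ) | (∀ x, u x ∈ Set.Icc a b) ∧
      ∀ x y, dist (u x) (u y) ≤ dist (k x) (k y)} := by
  have hcontinuous (f : X → ℝ) (hf : ∀ x y, dist (f x) (f y) ≤ dist (k x) (k y)) :
      Continuous f := continuous_iff_continuousAt.2 fun x ↦
    tendsto_iff_dist_tendsto_zero.2 <| squeeze_zero (fun _ ↦ dist_nonneg) (fun y ↦ hf y x)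
      (tendsto_iff_dist_tendsto_zero.1 (k.continuous.tendsto x))
  refine ArzelaAscoli.isCompact_of_equicontinuous _ ?_ fun x ↦ ?_
  · have himage : ContinuousMap.toFun '' {u : C(X, ℝ) | (∀ x, u x ∈ Set.Icc a b) ∧
        ∀ x y, dist (u x) (u y) ≤ dist (k x) (k y)} =
        Set.univ.pi (fun _ ↦ Set.Icc a b) ∩ {f | ∀ x y, dist (f x) (f y) ≤ dist (k x) (k y)} := by
      ext f
      refine ⟨?_, fun hf ↦ ⟨⟨f, hcontinuous f hf.2⟩, ⟨fun x ↦ hf.1 x trivial, hf.2⟩, rfl⟩⟩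
      rintro ⟨u, hu, rfl⟩
      exact ⟨fun x _ ↦ hu.1 x, hu.2⟩
    rw [himage]
    refine (isCompact_univ_pi fun _ ↦ isCompact_Icc).inter_right ?_
    simp only [Set.ofPred_forall]
    exact isClosed_iInter fun x ↦ isClosed_iInter fun y ↦
      isClosed_le (by fun_prop) continuous_const
  · rw [Metric.equicontinuousAt_iff_right]
    intro ε hε
    filter_upwards [Metric.tendsto_nhds.1 (k.continuous.tendsto x) ε hε] with y hy u
    exact (u.2.2 x y).trans_lt (by rwa [dist_comm])

variable [MetricSpace X] [CompactSpace X] [MeasurableSpace X] [BorelSpace X] {μ : Measure X}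
  {s p q : ℝ}

lemma continuous_lpQuasinorm_of_continuous [IsFiniteMeasure μ] [NeZero μ] {Y : Type*}
    [TopologicalSpace Y] {f : Y × X → ℝ} (hf : Continuous f) (hpos : ∀ z, 0 < f z) (r : ℝ) :
    Continuous fun y ↦ lpQuasinorm μ r fun x ↦ f (y, x) := by
  have hpow : Continuous fun z ↦ |f z| ^ r :=
    hf.abs.rpow_const fun z ↦ .inl (abs_pos.2 (hpos z).ne').ne'
  refine (continuous_integral_of_continuous hpow).rpow_const fun y ↦ .inl ?_
  exact (integral_pos_of_continuous (hpow.comp (.prodMk_right y))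
    fun x ↦ Real.rpow_pos_of_pos (abs_pos.2 (hpos _).ne') r).ne'

lemma continuous_rieszQuotient_of_continuous [IsFiniteMeasure μ] [NullSingletonClass μ] [NeZero μ]
    (h : ReverseHolderConjugate p q) (hs : 0 ≤ s) {Y : Type*} [TopologicalSpace Y]
    {f : Y × X → ℝ} (hf : Continuous f) (hpos : ∀ z, 0 < f z) :
    Continuous fun y ↦ rieszQuotient μ s p q fun x ↦ f (y, x) := by
  have hadm y : Admissible μ fun x ↦ f (y, x) :=
    .of_continuous (hf.comp (.prodMk_right y)) fun x ↦ hpos _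
  have hpotential : Continuous fun z : Y × X ↦ rieszPotential μ s (fun x ↦ f (z.1, x)) z.2 :=
    continuous_integral_of_continuous
      (K := fun z : (Y × X) × X ↦ f (z.1.1, z.2) * dist z.1.2 z.2 ^ s)
      ((hf.comp (by fun_prop)).mul ((continuous_dist_rpow hs).comp
        (f := fun z : (Y × X) × X ↦ (z.1.2, z.2)) (by fun_prop)))
  exact (continuous_lpQuasinorm_of_continuous hpotential
    (fun z ↦ (hadm z.1).rieszPotential_pos hs z.2) q).div
    (continuous_lpQuasinorm_of_continuous hf hpos p) fun y ↦ ((hadm y).lpQuasinorm_pos h).ne'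

/-- The kernel `dist x y ^ s` as a continuous family of continuous functions. -/
noncomputable def rieszKernel (X : Type*) [MetricSpace X] {s : ℝ} (hs : 0 ≤ s) : C(X, C(X, ℝ)) :=
  ContinuousMap.curry ⟨fun z : X × X ↦ dist z.1 z.2 ^ s, continuous_dist_rpow hs⟩

lemma rieszPotential_le_norm_rieszKernel (hs : 0 ≤ s) {F : X → ℝ} (hF : Admissible μ F)
    (hmass : ∫ x, F x ∂μ = 1) (x : X) : rieszPotential μ s F x ≤ ‖rieszKernel X hs‖ := by
  have hkernel y : dist x y ^ s ≤ ‖rieszKernel X hs‖ :=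
    (le_abs_self _).trans (((rieszKernel X hs x).norm_coe_le_norm y).trans
      ((rieszKernel X hs).norm_coe_le_norm x))
  refine (integral_mono (integrable_mul_dist_rpow hs hF.integrable x)
    (hF.integrable.mul_const ‖rieszKernel X hs‖)
    fun y ↦ mul_le_mul_of_nonneg_left (hkernel y) (hF.nonneg y)).trans_eq ?_
  rw [integral_mul_const, hmass, one_mul]

lemma dist_rieszPotential_le (hs : 0 ≤ s) {F : X → ℝ} (hF : Admissible μ F)
    (hmass : ∫ x, F x ∂μ = 1) (x y : X) :
    dist (rieszPotential μ s F x) (rieszPotential μ s F y) ≤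
      dist (rieszKernel X hs x) (rieszKernel X hs y) := by
  have hx := integrable_mul_dist_rpow hs hF.integrable x
  have hy := integrable_mul_dist_rpow hs hF.integrable y
  rw [Real.dist_eq, rieszPotential, rieszPotential, ← integral_sub hx hy]
  refine abs_integral_le_integral_abs.trans ((integral_mono (hx.sub hy).abs
    (hF.integrable.mul_const (dist (rieszKernel X hs x) (rieszKernel X hs y)))
    fun z ↦ ?_).trans_eq ?_)
  · simp only [Pi.sub_apply, ← mul_sub, abs_mul, abs_of_nonneg (hF.nonneg z)]
    exact mul_le_mul_of_nonneg_left (ContinuousMap.dist_apply_le_dist (f := rieszKernel X hs x)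
      (g := rieszKernel X hs y) z) (hF.nonneg z)
  · rw [integral_mul_const, hmass, one_mul]

/-- The lower bound on potentials replaces the compactness lost to the noncompact symmetry group
of the quotient. -/
lemma exists_isRieszMinimizer [IsFiniteMeasure μ] [NullSingletonClass μ] [NeZero μ]
    (h : ReverseHolderConjugate p q) (hs : 0 ≤ s) {c : ℝ} (hc : 0 < c)
    (hlower : ∀ F, Admissible μ F → ∃ F', Admissible μ F' ∧
      rieszQuotient μ s p q F' = rieszQuotient μ s p q F ∧
      ∀ x, c * ∫ y, F' y ∂μ ≤ rieszPotential μ s F' x) :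
    ∃ G, IsRieszMinimizer μ s p q G := by
  set S := {u : C(X, ℝ) | (∀ x, u x ∈ Set.Icc c ‖rieszKernel X hs‖) ∧
    ∀ x y, dist (u x) (u y) ≤ dist (rieszKernel X hs x) (rieszKernel X hs y)}
  have hpos (z : S × X) : 0 < z.1.1 z.2 := hc.trans_le (z.1.2.1 z.2).1
  have hcontinuous : Continuous fun z : S × X ↦ z.1.1 z.2 ^ (q - 1) :=
    (by fun_prop : Continuous fun z : S × X ↦ z.1.1 z.2).rpow_const fun z ↦ .inl (hpos z).ne'
  have hcompetitor F (hF : Admissible μ F) : ∃ u : S,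
      rieszQuotient μ s p q (fun x ↦ u.1 x ^ (q - 1)) ≤ rieszQuotient μ s p q F := by
    obtain ⟨F', hF', hquotient, hbound⟩ := hlower F hF
    have hmass := hF'.integral_pos
    set N := fun x ↦ (∫ y, F' y ∂μ)⁻¹ * F' x with hN
    have hNadm : Admissible μ N := hF'.const_mul (inv_pos.2 hmass)
    have hNmass : ∫ x, N x ∂μ = 1 := by rw [integral_const_mul, inv_mul_cancel₀ hmass.ne']
    refine ⟨⟨⟨rieszPotential μ s N, continuous_rieszPotential hs hNadm.integrable⟩,
      fun x ↦ ⟨?_, rieszPotential_le_norm_rieszKernel hs hNadm hNmass x⟩,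
      dist_rieszPotential_le hs hNadm hNmass⟩, ?_⟩
    · rw [ContinuousMap.coe_mk, hN, rieszPotential_const_mul, le_inv_mul_iff₀ hmass, mul_comm]
      exact hbound x
    · rw [← hquotient, ← rieszQuotient_const_mul h (inv_ne_zero hmass.ne') F']
      exact rieszQuotient_dualFunction_le h hs hNadm
  have : CompactSpace S := isCompact_iff_compactSpace.1 (isCompact_setOf_mem_Icc_and_dist_le _ _ _)
  obtain ⟨u₀, -⟩ := hcompetitor _ (.of_continuous continuous_const fun _ ↦ one_pos)
  obtain ⟨u, -, hu⟩ := isCompact_univ.exists_isMinOn ⟨u₀, trivial⟩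
    (continuous_rieszQuotient_of_continuous (μ := μ) h hs hcontinuous
      fun z ↦ Real.rpow_pos_of_pos (hpos z) (q - 1)).continuousOn
  refine ⟨fun x ↦ u.1 x ^ (q - 1), .of_continuous (hcontinuous.comp (.prodMk_right u))
    fun x ↦ Real.rpow_pos_of_pos (hpos (u, x)) _, fun F hF ↦ ?_⟩
  obtain ⟨w, hw⟩ := hcompetitor F hF
  exact (hu (Set.mem_univ w)).trans hw

end Existence

section Polarization

variable {X : Type*} [MetricSpace X] [MeasurableSpace X] {μ : Measure X} {s p q : ℝ}
  {ρ : X ≃ᵢ X} {t F G : X → ℝ}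

/-- An abstract hyperplane reflection: `ρ` is a measure-preserving isometric involution and `t` a
signed distance to its mirror, normalised by `dist_sq`. -/
structure IsReflection (μ : Measure X) (ρ : X ≃ᵢ X) (t : X → ℝ) : Prop where
  continuous : Continuous t
  involutive : Function.Involutive ρ
  measurePreserving : MeasurePreserving ρ μ μ
  dist_sq : ∀ x y, dist x (ρ y) ^ 2 = dist x y ^ 2 + t x * t y

/-- Two-point rearrangement: of the values of `F` at `x` and `ρ x`, the larger one is placed on
the side `0 < t` of the mirror. -/
noncomputable def polarization (ρ : X ≃ᵢ X) (t F : X → ℝ) (x : X) : ℝ :=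
  (F x + F (ρ x)) / 2 + Real.sign (t x) * |F x - F (ρ x)| / 2

lemma measurable_realSign : Measurable Real.sign :=
  .ite measurableSet_Iio measurable_const
    (.ite measurableSet_Ioi measurable_const measurable_const)

lemma realSign_mul_self (a : ℝ) : Real.sign a * a = |a| := by
  obtain ha | rfl | ha := lt_trichotomy a 0
  · rw [Real.sign_of_neg ha, abs_of_neg ha, neg_one_mul]
  · simp
  · rw [Real.sign_of_pos ha, abs_of_pos ha, one_mul]

lemma realSign_mul (a b : ℝ) : Real.sign (a * b) = Real.sign a * Real.sign b := by
  obtain ha | rfl | ha := lt_trichotomy a 0 <;> obtain hb | rfl | hb := lt_trichotomy b 0 <;>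
    simp [Real.sign_of_neg, Real.sign_of_pos, mul_pos_of_neg_of_neg, mul_neg_of_neg_of_pos,
      mul_neg_of_pos_of_neg, *]

namespace IsReflection

section Pointwise

variable (h : IsReflection μ ρ t)
include h

lemma apply_eq_self {x : X} (hx : t x = 0) : ρ x = x := by
  have hdist := h.dist_sq x x
  rw [hx, dist_self, mul_zero, add_zero, sq_eq_sq₀ dist_nonneg le_rfl] at hdist
  exact (dist_eq_zero.1 hdist).symm

lemma dist_reflect_left (x y : X) : dist (ρ x) y = dist x (ρ y) := by
  rw [← ρ.dist_eq, h.involutive]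

lemma apply_reflect (x : X) : t (ρ x) = -t x := by
  obtain hx | hx := eq_or_ne (t x) 0
  · rw [h.apply_eq_self hx, hx, neg_zero]
  have hleft := h.dist_sq (ρ x) x
  rw [ρ.dist_eq, h.dist_reflect_left, h.dist_sq] at hleft
  have : t x * (t (ρ x) + t x) = 0 := by linarith
  exact eq_neg_of_add_eq_zero_left ((mul_eq_zero.1 this).resolve_left hx)

lemma sign_dist_rpow_sub (hs : 0 < s) (x y : X) :
    Real.sign (dist x (ρ y) ^ s - dist x y ^ s) = Real.sign (t x * t y) := by
  have hlt {a b : ℝ} (ha : 0 ≤ a) (hb : 0 ≤ b) (hab : a ^ 2 < b ^ 2) : a ^ s < b ^ s :=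
    Real.rpow_lt_rpow ha (lt_of_pow_lt_pow_left₀ 2 hb hab) hs
  have hsq := h.dist_sq x y
  obtain hneg | hzero | hpos := lt_trichotomy (t x * t y) 0
  · rw [Real.sign_of_neg hneg, Real.sign_of_neg]
    exact sub_neg.2 (hlt dist_nonneg dist_nonneg (by linarith))
  · rw [hzero, add_zero, sq_eq_sq₀ dist_nonneg dist_nonneg] at hsq
    rw [hzero, hsq, sub_self]
  · rw [Real.sign_of_pos hpos, Real.sign_of_pos]
    exact sub_pos.2 (hlt dist_nonneg dist_nonneg (by linarith))

lemma polarization_reflect (F : X → ℝ) (x : X) :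
    polarization ρ t F (ρ x) =
      (F x + F (ρ x)) / 2 - Real.sign (t x) * |F x - F (ρ x)| / 2 := by
  rw [polarization, h.involutive, h.apply_reflect, Real.sign_neg, abs_sub_comm]
  ring

lemma polarization_eq_or (F : X → ℝ) (x : X) :
    polarization ρ t F x = F x ∧ polarization ρ t F (ρ x) = F (ρ x) ∨
      polarization ρ t F x = F (ρ x) ∧ polarization ρ t F (ρ x) = F x := by
  rw [h.polarization_reflect, polarization]
  obtain hneg | hzero | hpos := lt_trichotomy (t x) 0
  · rw [Real.sign_of_neg hneg]
    grind
  · rw [h.apply_eq_self hzero]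
    simp
  · rw [Real.sign_of_pos hpos]
    grind

end Pointwise

section Integral

variable (h : IsReflection μ ρ t)
include h

lemma integrable_comp {f : X → ℝ} (hf : Integrable f μ) : Integrable (fun x ↦ f (ρ x)) μ :=
  h.measurePreserving.integrable_comp_of_integrable hf

variable [BorelSpace X]

lemma integral_comp (f : X → ℝ) : ∫ x, f (ρ x) ∂μ = ∫ x, f x ∂μ :=
  h.measurePreserving.integral_comp ρ.toHomeomorph.measurableEmbedding f

lemma integrable_polarization (hF : Integrable F μ) : Integrable (polarization ρ t F) μ := by
  have hFρ := h.integrable_comp hF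
  have hsign : Measurable fun x ↦ Real.sign (t x) :=
    measurable_realSign.comp h.continuous.measurable
  refine ((hF.add hFρ).div_const 2).add (((hF.sub hFρ).abs.bdd_mul (c := 1)
    hsign.aestronglyMeasurable (.of_forall fun x ↦ ?_)).div_const 2)
  obtain hx | hx | hx := Real.sign_apply_eq (t x) <;> simp [hx]

lemma integral_comp_polarization {f : ℝ → ℝ} (hF : Integrable (fun x ↦ f (F x)) μ)
    (hpol : Integrable (fun x ↦ f (polarization ρ t F x)) μ) :
    ∫ x, f (polarization ρ t F x) ∂μ = ∫ x, f (F x) ∂μ := by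
  have hsum {H : X → ℝ} (hH : Integrable (fun x ↦ f (H x)) μ) :
      ∫ x, (f (H x) + f (H (ρ x))) ∂μ = 2 * ∫ x, f (H x) ∂μ := by
    rw [integral_add hH (h.integrable_comp hH), h.integral_comp fun x ↦ f (H x), two_mul]
  refine mul_left_cancel₀ two_ne_zero ((hsum hpol).symm.trans (Eq.trans ?_ (hsum hF)))
  refine integral_congr_ae (.of_forall fun x ↦ ?_)
  obtain ⟨hx, hρx⟩ | ⟨hx, hρx⟩ := h.polarization_eq_or F x
  · simp only [hx, hρx]
  · simp only [hx, hρx, add_comm]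

lemma admissible_polarization (hF : Admissible μ F) : Admissible μ (polarization ρ t F) where
  integrable := h.integrable_polarization hF.integrable
  nonneg x := by
    obtain ⟨hx, -⟩ | ⟨hx, -⟩ := h.polarization_eq_or F x
    · exact hx ▸ hF.nonneg x
    · exact hx ▸ hF.nonneg (ρ x)
  integral_pos := hF.integral_pos.trans_eq (h.integral_comp_polarization (f := id) hF.integrable
    (h.integrable_polarization hF.integrable)).symm

lemma lpQuasinorm_polarization [IsFiniteMeasure μ] (hF : Admissible μ F) (hp : 0 ≤ p)
    (hp' : p ≤ 1) : lpQuasinorm μ p (polarization ρ t F) = lpQuasinorm μ p F := by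
  have hpol := h.admissible_polarization hF
  rw [lpQuasinorm_of_nonneg hF.nonneg, lpQuasinorm_of_nonneg hpol.nonneg,
    h.integral_comp_polarization (f := (· ^ p)) (hF.integrable_rpow hp hp')
      (hpol.integrable_rpow hp hp')]

end Integral

/-- The sum of `H` over the orbit of a pair of points under reflecting either of them. -/
def orbitSum (ρ : X ≃ᵢ X) (H : X × X → ℝ) (z : X × X) : ℝ :=
  H z + H (ρ z.1, ρ z.2) + (H (ρ z.1, z.2) + H (z.1, ρ z.2))

/-- Its sign decides whether polarization lowers the energy at a pair of points; see
`orbitSum_sub_orbitSum_polarization`. -/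
noncomputable def reflectionDefect (ρ : X ≃ᵢ X) (s : ℝ) (F G : X → ℝ) (z : X × X) : ℝ :=
  (F z.1 - F (ρ z.1)) * (G z.2 - G (ρ z.2)) * (dist z.1 (ρ z.2) ^ s - dist z.1 z.2 ^ s)

section Energy
variable [SFinite μ] (h : IsReflection μ ρ t)
include h

lemma integrable_orbitSum {H : X × X → ℝ} (hH : Integrable H (μ.prod μ)) :
    Integrable (orbitSum ρ H) (μ.prod μ) :=
  (hH.add ((h.measurePreserving.prod h.measurePreserving).integrable_comp_of_integrable hH)).add
    (((h.measurePreserving.prod (.id μ)).integrable_comp_of_integrable hH).add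
      (((MeasurePreserving.id μ).prod h.measurePreserving).integrable_comp_of_integrable hH))

variable [BorelSpace X]

lemma integral_orbitSum {H : X × X → ℝ} (hH : Integrable H (μ.prod μ)) :
    ∫ z, orbitSum ρ H z ∂μ.prod μ = 4 * ∫ z, H z ∂μ.prod μ := by
  have hρ := h.measurePreserving
  have hemb : MeasurableEmbedding ρ := ρ.toHomeomorph.measurableEmbedding
  have hboth := hρ.prod hρ
  have hfst := hρ.prod (.id μ)
  have hsnd := (MeasurePreserving.id μ).prod hρ
  have iboth := hboth.integrable_comp_of_integrable hH
  have ifst := hfst.integrable_comp_of_integrable hH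
  have isnd := hsnd.integrable_comp_of_integrable hH
  have eboth := hboth.integral_comp (hemb.prodMap hemb) H
  have efst := hfst.integral_comp (hemb.prodMap .id) H
  have esnd := hsnd.integral_comp (MeasurableEmbedding.id.prodMap hemb) H
  calc ∫ z, orbitSum ρ H z ∂μ.prod μ
      = ∫ z, H z ∂μ.prod μ + ∫ z, H (Prod.map ρ ρ z) ∂μ.prod μ +
        (∫ z, H (Prod.map ρ id z) ∂μ.prod μ + ∫ z, H (Prod.map id ρ z) ∂μ.prod μ) :=
      (integral_add (hH.add iboth) (ifst.add isnd)).trans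
        (congrArg₂ (· + ·) (integral_add hH iboth) (integral_add ifst isnd))
    _ = 4 * ∫ z, H z ∂μ.prod μ := by
      rw [eboth, efst, esnd]
      ring

omit [SFinite μ] [BorelSpace X] in
lemma orbitSum_sub_orbitSum_polarization (hs : 0 < s) (F G : X → ℝ) (z : X × X) :
    orbitSum ρ (fun z ↦ F z.1 * G z.2 * dist z.1 z.2 ^ s) z -
        orbitSum ρ (fun z ↦ polarization ρ t F z.1 * polarization ρ t G z.2 *
          dist z.1 z.2 ^ s) z =
      (|reflectionDefect ρ s F G z| - reflectionDefect ρ s F G z) / 2 := by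
  have habs : |reflectionDefect ρ s F G z| =
      |F z.1 - F (ρ z.1)| * |G z.2 - G (ρ z.2)| * (Real.sign (t z.1) * Real.sign (t z.2) *
        (dist z.1 (ρ z.2) ^ s - dist z.1 z.2 ^ s)) := by
    rw [reflectionDefect, abs_mul, abs_mul, ← realSign_mul, ← h.sign_dist_rpow_sub hs,
      realSign_mul_self]
  rw [habs]
  simp only [orbitSum, h.polarization_reflect, h.dist_reflect_left, h.involutive _]
  simp only [polarization, reflectionDefect]
  ring

omit [SFinite μ] [BorelSpace X] in
lemma mul_mul_nonneg_of_reflectionDefect_nonneg (hs : 0 < s) {z : X × X}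
    (hz : 0 ≤ reflectionDefect ρ s F G z) :
    0 ≤ ((F z.1 - F (ρ z.1)) * t z.1) * ((G z.2 - G (ρ z.2)) * t z.2) := by
  set D := dist z.1 (ρ z.2) ^ s - dist z.1 z.2 ^ s with hD
  have hsign : Real.sign D = Real.sign (t z.1 * t z.2) := h.sign_dist_rpow_sub hs z.1 z.2
  rw [mul_mul_mul_comm]
  obtain hzero | hne := eq_or_ne D 0
  · rw [hzero, Real.sign_zero, eq_comm, Real.sign_eq_zero_iff] at hsign
    rw [hsign, mul_zero]
  refine nonneg_of_mul_nonneg_left ?_ (abs_pos.2 hne)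
  calc 0 ≤ reflectionDefect ρ s F G z * |t z.1 * t z.2| := mul_nonneg hz (abs_nonneg _)
    _ = _ := by
      rw [← realSign_mul_self, ← realSign_mul_self, hsign, reflectionDefect, ← hD]
      ring

variable [CompactSpace X]

lemma eight_mul_rieszEnergy_sub_rieszEnergy_polarization (hs : 0 < s) (hF : Integrable F μ)
    (hG : Integrable G μ) :
    8 * (rieszEnergy μ s F G - rieszEnergy μ s (polarization ρ t F) (polarization ρ t G)) =
      ∫ z, (|reflectionDefect ρ s F G z| - reflectionDefect ρ s F G z) ∂μ.prod μ := by
  have hFp := h.integrable_polarization hF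
  have hGp := h.integrable_polarization hG
  have hint := integrable_prod_mul_dist_rpow hs.le hF hG
  have hintp := integrable_prod_mul_dist_rpow hs.le hFp hGp
  have hdefect := integral_sub (h.integrable_orbitSum hint) (h.integrable_orbitSum hintp)
  simp only [h.orbitSum_sub_orbitSum_polarization hs, integral_div] at hdefect
  rw [h.integral_orbitSum hint, h.integral_orbitSum hintp,
    ← rieszEnergy_eq_integral_prod hs.le hF hG, ← rieszEnergy_eq_integral_prod hs.le hFp hGp]
    at hdefect
  linarith

lemma ae_reflectionDefect_nonneg (hs : 0 < s) (hF : Integrable F μ) (hG : Integrable G μ)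
    (hle : rieszEnergy μ s F G ≤ rieszEnergy μ s (polarization ρ t F) (polarization ρ t G)) :
    ∀ᵐ z ∂μ.prod μ, 0 ≤ reflectionDefect ρ s F G z := by
  have hnonneg z : 0 ≤ |reflectionDefect ρ s F G z| - reflectionDefect ρ s F G z :=
    sub_nonneg.2 (le_abs_self _)
  have hintegrable : Integrable
      (fun z ↦ |reflectionDefect ρ s F G z| - reflectionDefect ρ s F G z) (μ.prod μ) := by
    have hdefect := ((h.integrable_orbitSum (integrable_prod_mul_dist_rpow hs.le hF hG)).sub
      (h.integrable_orbitSum (integrable_prod_mul_dist_rpow hs.le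
        (h.integrable_polarization hF) (h.integrable_polarization hG)))).const_mul 2
    refine hdefect.congr (.of_forall fun z ↦ ?_)
    simp only [Pi.sub_apply, h.orbitSum_sub_orbitSum_polarization hs]
    ring
  have hzero : ∫ z, (|reflectionDefect ρ s F G z| - reflectionDefect ρ s F G z) ∂μ.prod μ = 0 := by
    refine (integral_nonneg hnonneg).antisymm' ?_
    rw [← h.eight_mul_rieszEnergy_sub_rieszEnergy_polarization hs hF hG]
    linarith
  filter_upwards [(integral_eq_zero_iff_of_nonneg hnonneg hintegrable).1 hzero] with z hz
  rw [← sub_eq_zero.1 hz]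
  exact abs_nonneg _

end Energy

section Rigidity

variable [BorelSpace X] [CompactSpace X] [IsFiniteMeasure μ] (h : IsReflection μ ρ t)
include h

lemma integral_sub_mul_eq_zero (hF : Continuous F) (hcenter : ∫ x, F x * t x ∂μ = 0) :
    ∫ x, (F x - F (ρ x)) * t x ∂μ = 0 := by
  have hint : Integrable (fun x ↦ F x * t x) μ :=
    integrable_of_continuous (hF.mul h.continuous)
  calc ∫ x, (F x - F (ρ x)) * t x ∂μ
      = ∫ x, (F x * t x + F (ρ x) * t (ρ x)) ∂μ := by
        simp only [h.apply_reflect, sub_mul, mul_neg, ← sub_eq_add_neg]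
    _ = 0 := by
      rw [integral_add hint (h.integrable_comp hint), h.integral_comp fun x ↦ F x * t x, hcenter,
        add_zero]

variable [μ.IsOpenPosMeasure]

lemma comp_eq_of_integral_abs_eq_zero (hF : Continuous F)
    (hzero : ∫ x, |(F x - F (ρ x)) * t x| ∂μ = 0) (x : X) : F (ρ x) = F x := by
  have hcont : Continuous fun x ↦ |(F x - F (ρ x)) * t x| :=
    ((hF.sub (hF.comp ρ.continuous)).mul h.continuous).abs
  have hae := (integral_eq_zero_iff_of_nonneg (fun x ↦ abs_nonneg _)
    (integrable_of_continuous hcont)).1 hzero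
  have hx := congrFun ((hcont.ae_eq_iff_eq μ continuous_zero).1 hae) x
  obtain hF | ht := mul_eq_zero.1 (abs_eq_zero.1 hx)
  · exact (sub_eq_zero.1 hF).symm
  · rw [h.apply_eq_self ht]

/-- The antisymmetric parts of `F` and `G` have products of constant sign, while that of `F` has
mean zero by the centering hypothesis. -/
lemma comp_eq_or_comp_eq (hs : 0 < s) (hF : Continuous F) (hG : Continuous G)
    (hcenter : ∫ x, F x * t x ∂μ = 0)
    (hle : rieszEnergy μ s F G ≤ rieszEnergy μ s (polarization ρ t F) (polarization ρ t G)) :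
    (∀ x, F (ρ x) = F x) ∨ ∀ x, G (ρ x) = G x := by
  set φ := fun x ↦ (F x - F (ρ x)) * t x
  set ψ := fun x ↦ (G x - G (ρ x)) * t x
  have hprod : (∫ x, |φ x| ∂μ) * ∫ x, |ψ x| ∂μ = 0 := by
    calc (∫ x, |φ x| ∂μ) * ∫ x, |ψ x| ∂μ
        = ∫ z, |φ z.1| * |ψ z.2| ∂μ.prod μ := (integral_prod_mul _ _).symm
      _ = ∫ z, φ z.1 * ψ z.2 ∂μ.prod μ := by
        refine integral_congr_ae ?_
        filter_upwards [h.ae_reflectionDefect_nonneg hs (integrable_of_continuous hF)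
          (integrable_of_continuous hG) hle] with z hz
        rw [← abs_mul, abs_of_nonneg (h.mul_mul_nonneg_of_reflectionDefect_nonneg hs hz)]
      _ = 0 := by rw [integral_prod_mul φ ψ, h.integral_sub_mul_eq_zero hF hcenter, zero_mul]
  exact (mul_eq_zero.1 hprod).imp (h.comp_eq_of_integral_abs_eq_zero hF)
    (h.comp_eq_of_integral_abs_eq_zero hG)

end Rigidity

end IsReflection

namespace IsRieszMinimizer

variable [BorelSpace X] [CompactSpace X] [IsFiniteMeasure μ] [NullSingletonClass μ] [NeZero μ]

lemma rieszEnergy_dualFunction_le_polarization (hF : IsRieszMinimizer μ s p q F)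
    (hpq : ReverseHolderConjugate p q) (hs : 0 ≤ s) (h : IsReflection μ ρ t) :
    rieszEnergy μ s F (dualFunction μ s q F) ≤
      rieszEnergy μ s (polarization ρ t F) (polarization ρ t (dualFunction μ s q F)) := by
  set G := dualFunction μ s q F
  have hG : Admissible μ G := hF.1.admissible_dualFunction hs
  have hFp := h.admissible_polarization hF.1
  have hGp := h.admissible_polarization hG
  have hquotient := (div_le_div_iff₀ (hF.1.lpQuasinorm_pos hpq) (hGp.lpQuasinorm_pos hpq)).1
    (hF.2 _ hGp)
  calc rieszEnergy μ s F G
      = lpQuasinorm μ q (rieszPotential μ s F) * lpQuasinorm μ p (polarization ρ t G) := by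
        rw [rieszEnergy_dualFunction hpq hs hF.1,
          h.lpQuasinorm_polarization hG hpq.pos.le hpq.lt_one.le]
    _ ≤ lpQuasinorm μ q (rieszPotential μ s (polarization ρ t G)) * lpQuasinorm μ p F := hquotient
    _ = lpQuasinorm μ p (polarization ρ t F) *
          lpQuasinorm μ q (rieszPotential μ s (polarization ρ t G)) := by
        rw [h.lpQuasinorm_polarization hF.1 hpq.pos.le hpq.lt_one.le, mul_comm]
    _ ≤ rieszEnergy μ s (polarization ρ t F) (polarization ρ t G) :=
        lpQuasinorm_mul_le_rieszEnergy hpq hs hFp hGp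

lemma dualFunction_dualFunction (hF : IsRieszMinimizer μ s p q F)
    (hpq : ReverseHolderConjugate p q) (hs : 0 ≤ s) :
    IsRieszMinimizer μ s p q (dualFunction μ s q (dualFunction μ s q F)) := by
  have hG := hF.1.admissible_dualFunction (q := q) hs
  exact ⟨hG.admissible_dualFunction hs, fun H hH ↦
    (rieszQuotient_dualFunction_le hpq hs hG).trans
      ((rieszQuotient_dualFunction_le hpq hs hF.1).trans (hF.2 H hH))⟩

lemma comp_reflection_eq [μ.IsOpenPosMeasure] (hF : IsRieszMinimizer μ s p q F)
    (hpq : ReverseHolderConjugate p q) (hs : 0 < s) (hcont : Continuous F)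
    (h : IsReflection μ ρ t) (hcenter : ∫ x, F x * t x ∂μ = 0) (x : X) : F (ρ x) = F x := by
  have hG := hF.1.admissible_dualFunction (q := q) hs.le
  obtain hsymm | hsymm := h.comp_eq_or_comp_eq hs hcont (hF.1.continuous_dualFunction hs.le)
    hcenter (hF.rieszEnergy_dualFunction_le_polarization hpq hs.le h)
  · exact hsymm x
  obtain ⟨c, -, hae⟩ := hF.exists_ae_eq_const_mul_dualFunction_dualFunction hpq hs.le
  have heq := (hcont.ae_eq_iff_eq μ
    ((hG.continuous_dualFunction hs.le).const_mul c)).1 hae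
  rw [heq]
  simp only [dualFunction]
  rw [← rieszPotential_comp_isometry h.measurePreserving]
  exact congrArg (c * · ^ (q - 1)) (congrArg (rieszPotential μ s · x) (funext hsymm))

end IsRieszMinimizer

end Polarization

section ConformalTransform

/-- The exponents for which the Riesz quotient with kernel `dist x y ^ s` is conformally invariant
on a sphere of dimension `d`; in the theorem `d = n` and `s = α - n`. -/
structure ConformalExponents (d s p q : ℝ) : Prop where
  dim_pos : 0 < d
  order_pos : 0 < s
  add_mul_eq : (d + s / 2) * p = d
  mul_eq_neg : s / 2 * q = -d

lemma ConformalExponents.reverseHolderConjugate {d s p q : ℝ} (h : ConformalExponents d s p q) :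
    ReverseHolderConjugate p q := by
  have hd := h.dim_pos
  have hs := h.order_pos
  have hp : p = d / (d + s / 2) := eq_div_of_mul_eq (by positivity) (by linarith [h.add_mul_eq])
  have hq : q = -d / (s / 2) := eq_div_of_mul_eq (by positivity) (by linarith [h.mul_eq_neg])
  refine ⟨by rw [hp]; positivity, ?_, ?_⟩
  · rw [hp, div_lt_one (by positivity)]
    linarith
  · rw [hp, hq]
    field

variable {E : Type*} [NormedAddCommGroup E] [InnerProductSpace ℝ E]

/-- The action of `mobius v` on functions which multiplies Riesz potentials by a power of
`boostFactor v`, see `rieszPotential_conformalTransform`. -/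
noncomputable def conformalTransform (s : ℝ) (v : E) (F : sphere (0 : E) 1 → ℝ)
    (ω : sphere (0 : E) 1) : ℝ :=
  F (mobius v ω) * boostFactor v ω ^ (1 - finrank ℝ E - s / 2 : ℝ)

lemma boostFactor_rpow_mul_rpow (s : ℝ) (v : E) (ω : sphere (0 : E) 1) :
    boostFactor v ω ^ (1 - finrank ℝ E - s / 2 : ℝ) * boostFactor v ω ^ (s / 2) =
      boostFactor v ω ^ (1 - finrank ℝ E : ℝ) := by
  rw [← Real.rpow_add (boostFactor_pos v ω), sub_add_cancel]

variable [FiniteDimensional ℝ E] [MeasurableSpace E] [BorelSpace E]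

/-- The mass of the transform of `F` by the boost taking `w` to rest, see
`boostedMass_conformalTransform`. -/
noncomputable def boostedMass (s : ℝ) (F : sphere (0 : E) 1 → ℝ) (w : E) : ℝ :=
  ∫ ω, F ω * boostFactor w ω ^ (s / 2) ∂(surfaceMeasure E)

lemma boostedMass_zero (s : ℝ) (F : sphere (0 : E) 1 → ℝ) :
    boostedMass s F 0 = ∫ ω, F ω ∂(surfaceMeasure E) := by
  simp only [boostedMass, boostFactor_zero, Real.one_rpow, mul_one]

lemma integrable_mul_boostFactor_rpow {F : sphere (0 : E) 1 → ℝ}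
    (hF : Integrable F (surfaceMeasure E)) (w : E) (r : ℝ) :
    Integrable (fun ω ↦ F ω * boostFactor w ω ^ r) (surfaceMeasure E) :=
  integrable_mul_of_continuous hF (continuous_boostFactor_rpow w r)

variable [Nontrivial E]

lemma rieszPotential_conformalTransform (s : ℝ) (v : E) (F : sphere (0 : E) 1 → ℝ)
    (ω : sphere (0 : E) 1) :
    rieszPotential (surfaceMeasure E) s (conformalTransform s v F) ω =
      rieszPotential (surfaceMeasure E) s F (mobius v ω) * boostFactor v ω ^ (s / 2) := by
  rw [rieszPotential, rieszPotential]
  conv_rhs => rw [← integral_comp_mobius_mul_boostFactor v, ← integral_mul_const]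
  refine integral_congr_ae (.of_forall fun ζ ↦ ?_)
  simp only [conformalTransform]
  rw [dist_rpow_eq_mul_dist_mobius_rpow s v, ← boostFactor_rpow_mul_rpow s]
  ring

lemma boostedMass_conformalTransform (s : ℝ) (v w : E) (F : sphere (0 : E) 1 → ℝ) :
    boostedMass s (conformalTransform s v F) w =
      boostedMass s F (boostSpace v (lorentzFactor w) w) := by
  rw [boostedMass, boostedMass]
  conv_rhs => rw [← integral_comp_mobius_mul_boostFactor v]
  refine integral_congr_ae (.of_forall fun ζ ↦ ?_)
  simp only [conformalTransform]
  rw [boostFactor_eq_mul_boostFactor_mobius v w,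
    Real.mul_rpow (boostFactor_pos _ _).le (boostFactor_pos _ _).le,
    ← boostFactor_rpow_mul_rpow s]
  ring

lemma lpQuasinorm_comp_mobius_mul_boostFactor_rpow {r t : ℝ} (h : t * r = 1 - finrank ℝ E) (v : E)
    (f : sphere (0 : E) 1 → ℝ) :
    lpQuasinorm (surfaceMeasure E) r (fun ω ↦ f (mobius v ω) * boostFactor v ω ^ t) =
      lpQuasinorm (surfaceMeasure E) r f := by
  rw [lpQuasinorm, lpQuasinorm, ← integral_comp_mobius_mul_boostFactor v fun ω ↦ |f ω| ^ r]
  congr 2 with ω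
  have := boostFactor_pos v ω
  rw [abs_mul, abs_of_pos (a := _ ^ t) (by positivity),
    Real.mul_rpow (by positivity) (by positivity), ← Real.rpow_mul this.le, h]

lemma rieszQuotient_conformalTransform {s p q : ℝ}
    (h : ConformalExponents (finrank ℝ E - 1) s p q) (v : E) (F : sphere (0 : E) 1 → ℝ) :
    rieszQuotient (surfaceMeasure E) s p q (conformalTransform s v F) =
      rieszQuotient (surfaceMeasure E) s p q F := by
  rw [rieszQuotient, funext (rieszPotential_conformalTransform s v F),
    lpQuasinorm_comp_mobius_mul_boostFactor_rpow (h.mul_eq_neg.trans (neg_sub _ _)), rieszQuotient]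
  congr 1
  exact lpQuasinorm_comp_mobius_mul_boostFactor_rpow (by linarith [h.add_mul_eq]) v F

lemma Admissible.conformalTransform {s : ℝ} {F : sphere (0 : E) 1 → ℝ}
    (hF : Admissible (surfaceMeasure E) F) (v : E) :
    Admissible (surfaceMeasure E) (conformalTransform s v F) where
  integrable := by
    refine (integrable_mul_boostFactor_rpow
      ((integrable_comp_mobius_mul_boostFactor_iff v).2 hF.integrable) v (-(s / 2))).congr
      (.of_forall fun ω ↦ ?_)
    simp only [_root_.conformalTransform]
    rw [mul_assoc, ← Real.rpow_add (boostFactor_pos v ω), ← sub_eq_add_neg]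
  nonneg ω := mul_nonneg (hF.nonneg _) (Real.rpow_nonneg (boostFactor_pos v ω).le _)
  integral_pos := by
    rw [← boostedMass_zero s, boostedMass_conformalTransform]
    exact hF.integral_mul_pos (.of_forall fun ω ↦ Real.rpow_pos_of_pos (boostFactor_pos _ ω) _)
      (integrable_mul_boostFactor_rpow hF.integrable _ _)

end ConformalTransform

section Balancing

lemma hasDerivAt_integral_mul_of_continuous {X : Type*} [TopologicalSpace X] [CompactSpace X]
    [T2Space X] [MeasurableSpace X] [OpensMeasurableSpace X] {μ : Measure X} {F : X → ℝ}
    (hF : Integrable F μ) {K K' : ℝ × X → ℝ} (hK : Continuous K) (hK' : Continuous K')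
    (hderiv : ∀ t x, HasDerivAt (fun t ↦ K (t, x)) (K' (t, x)) t) (t : ℝ) :
    HasDerivAt (fun t ↦ ∫ x, F x * K (t, x) ∂μ) (∫ x, F x * K' (t, x) ∂μ) t := by
  have hint {L : ℝ × X → ℝ} (hL : Continuous L) (t : ℝ) : Integrable (fun x ↦ F x * L (t, x)) μ :=
    integrable_mul_of_continuous hF (hL.comp (.prodMk_right t))
  obtain ⟨C, hC⟩ := ((isCompact_closedBall t 1).prod isCompact_univ).exists_bound_of_continuousOn
    hK'.continuousOn
  refine (hasDerivAt_integral_of_dominated_loc_of_deriv_le (ball_mem_nhds t one_pos)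
    (.of_forall fun t ↦ (hint hK t).aestronglyMeasurable) (hint hK t)
    (hint hK' t).aestronglyMeasurable (.of_forall fun x r hr ↦ ?_) (hF.norm.mul_const C)
    (.of_forall fun x r _ ↦ (hderiv r x).const_mul (F x))).2
  rw [norm_mul]
  gcongr
  exact hC (r, x) ⟨ball_subset_closedBall hr, trivial⟩

variable {E : Type*} [NormedAddCommGroup E] [InnerProductSpace ℝ E]

lemma hasDerivAt_lorentzFactor_smul (e : E) (t : ℝ) :
    HasDerivAt (fun t : ℝ ↦ lorentzFactor (t • e)) (⟪t • e, e⟫ / lorentzFactor (t • e)) t := by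
  have hnorm := ((hasDerivAt_id t).smul_const e).norm_sq.const_add 1
  convert! hnorm.sqrt (by positivity) using 1
  simp only [lorentzFactor, id_eq, one_smul]
  rw [mul_div_mul_left _ _ two_ne_zero]

lemma hasDerivAt_boostFactor_smul (e : E) (ω : sphere (0 : E) 1) (t : ℝ) :
    HasDerivAt (fun t : ℝ ↦ boostFactor (t • e) ω)
      (⟪t • e, e⟫ / lorentzFactor (t • e) - ⟪(ω : E), e⟫) t := by
  simp only [boostFactor, real_inner_smul_right]
  exact (hasDerivAt_lorentzFactor_smul e t).sub (hasDerivAt_mul_const ⟪(ω : E), e⟫)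

lemma boostFactor_smul_coe (R : ℝ) (ξ ω : sphere (0 : E) 1) :
    boostFactor (R • (ξ : E)) ω = lorentzFactor (R • (ξ : E)) - R + R / 2 * dist ξ ω ^ 2 := by
  rw [boostFactor, dist_sq_eq_two_mul_one_sub_inner, real_inner_smul_right, real_inner_comm]
  ring

lemma le_lorentzFactor_smul_coe {R : ℝ} (hR : 0 ≤ R) (ξ : sphere (0 : E) 1) :
    R ≤ lorentzFactor (R • (ξ : E)) := by
  simpa [norm_smul, abs_of_nonneg hR] using (norm_lt_lorentzFactor (R • (ξ : E))).le

lemma lorentzFactor_smul_coe_le {R : ℝ} (hR : 0 < R) (ξ : sphere (0 : E) 1) :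
    lorentzFactor (R • (ξ : E)) ≤ R + 1 / (2 * R) := by
  refine Real.sqrt_le_iff.2 ⟨by positivity, ?_⟩
  rw [norm_smul, norm_eq_of_mem_sphere, Real.norm_of_nonneg hR.le, mul_one,
    show (R + 1 / (2 * R)) ^ 2 = 1 + R ^ 2 + (1 / (2 * R)) ^ 2 by field]
  exact le_add_of_nonneg_right (sq_nonneg _)

lemma mul_rpow_half_dist_sq {R s : ℝ} (hR : 0 ≤ R) {X : Type*} [PseudoMetricSpace X] (x y : X) :
    (R * dist x y ^ 2) ^ (s / 2) = R ^ (s / 2) * dist x y ^ s := by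
  rw [Real.mul_rpow hR (by positivity), ← dist_rpow_eq_sq_rpow_half]

lemma add_rpow_le_two_mul_rpow_add {x y r : ℝ} (hx : 0 ≤ x) (hy : 0 ≤ y) (hr : 0 ≤ r) :
    (x + y) ^ r ≤ (2 * x) ^ r + (2 * y) ^ r := by
  obtain hxy | hxy := le_total x y
  · exact (Real.rpow_le_rpow (by positivity) (by linarith) hr).trans
      (le_add_of_nonneg_left (by positivity))
  · exact (Real.rpow_le_rpow (by positivity) (by linarith) hr).trans
      (le_add_of_nonneg_right (by positivity))

variable [FiniteDimensional ℝ E] [MeasurableSpace E] [BorelSpace E] {s : ℝ}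
  {F : sphere (0 : E) 1 → ℝ}

/-- No boost decreases the mass of `F`: the normalisation of the conformal orbit of `F`. -/
def IsBalanced (s : ℝ) (F : sphere (0 : E) 1 → ℝ) : Prop :=
  ∀ w : E, ∫ ω, F ω ∂(surfaceMeasure E) ≤ boostedMass s F w

lemma continuous_boostedMass (hs : 0 ≤ s) (hF : Integrable F (surfaceMeasure E)) :
    Continuous (boostedMass s F) :=
  continuous_integral_mul_of_continuous hF
    (continuous_boostFactor_uncurry.rpow_const fun _ ↦ .inr (by positivity))

lemma mul_rieszPotential_le_boostedMass (hs : 0 ≤ s) (hF : Admissible (surfaceMeasure E) F)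
    {R : ℝ} (hR : 0 ≤ R) (ξ : sphere (0 : E) 1) :
    (R / 2) ^ (s / 2) * rieszPotential (surfaceMeasure E) s F ξ ≤
      boostedMass s F (R • (ξ : E)) := by
  rw [rieszPotential, ← integral_const_mul]
  refine integral_mono ((integrable_mul_dist_rpow hs hF.integrable ξ).const_mul _)
    (integrable_mul_boostFactor_rpow hF.integrable _ _) fun ω ↦ ?_
  have hle : R / 2 * dist ξ ω ^ 2 ≤ boostFactor (R • (ξ : E)) ω := by
    rw [boostFactor_smul_coe]
    linarith [le_lorentzFactor_smul_coe hR ξ]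
  have := hF.nonneg ω
  calc (R / 2) ^ (s / 2) * (F ω * dist ξ ω ^ s)
      = F ω * (R / 2 * dist ξ ω ^ 2) ^ (s / 2) := by
        rw [mul_rpow_half_dist_sq (by positivity)]
        ring
    _ ≤ F ω * boostFactor (R • (ξ : E)) ω ^ (s / 2) := by gcongr

lemma boostedMass_le_add_mul_rieszPotential (hs : 0 ≤ s) (hF : Admissible (surfaceMeasure E) F)
    {R : ℝ} (hR : 0 < R) (ξ : sphere (0 : E) 1) :
    boostedMass s F (R • (ξ : E)) ≤ (1 / R) ^ (s / 2) * ∫ ω, F ω ∂(surfaceMeasure E) +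
      R ^ (s / 2) * rieszPotential (surfaceMeasure E) s F ξ := by
  have hkernel := integrable_mul_dist_rpow hs hF.integrable ξ
  rw [rieszPotential, ← integral_const_mul, ← integral_const_mul,
    ← integral_add (hF.integrable.const_mul _) (hkernel.const_mul _)]
  refine integral_mono (integrable_mul_boostFactor_rpow hF.integrable _ _)
    ((hF.integrable.const_mul _).add (hkernel.const_mul _)) fun ω ↦ ?_
  have hle : boostFactor (R • (ξ : E)) ω ≤ 1 / (2 * R) + R / 2 * dist ξ ω ^ 2 := by
    rw [boostFactor_smul_coe]
    linarith [lorentzFactor_smul_coe_le hR ξ]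
  have hpos := boostFactor_pos (R • (ξ : E)) ω
  have := hF.nonneg ω
  calc F ω * boostFactor (R • (ξ : E)) ω ^ (s / 2)
      ≤ F ω * ((2 * (1 / (2 * R))) ^ (s / 2) + (2 * (R / 2 * dist ξ ω ^ 2)) ^ (s / 2)) := by
        gcongr
        exact (Real.rpow_le_rpow hpos.le hle (by positivity)).trans
          (add_rpow_le_two_mul_rpow_add (by positivity) (by positivity) (by positivity))
    _ = (1 / R) ^ (s / 2) * F ω + R ^ (s / 2) * (F ω * dist ξ ω ^ s) := by
        rw [show 2 * (1 / (2 * R)) = 1 / R by field,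
          show 2 * (R / 2 * dist ξ ω ^ 2) = R * dist ξ ω ^ 2 by ring, mul_rpow_half_dist_sq hR.le]
        ring

lemma IsBalanced.integral_le_four_mul_rieszPotential (hs : 0 < s)
    (hF : Admissible (surfaceMeasure E) F) (h : IsBalanced s F) (ξ : sphere (0 : E) 1) :
    ∫ ω, F ω ∂(surfaceMeasure E) ≤ 4 * rieszPotential (surfaceMeasure E) s F ξ := by
  have hpow : ((2 : ℝ) ^ (2 / s)) ^ (s / 2) = 2 := by
    rw [← Real.rpow_mul two_pos.le, div_mul_div_cancel₀ hs.ne', div_self two_ne_zero, Real.rpow_one]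
  have hle := (h _).trans
    (boostedMass_le_add_mul_rieszPotential hs.le hF (R := 2 ^ (2 / s)) (by positivity) ξ)
  rw [Real.div_rpow one_pos.le (by positivity), Real.one_rpow, hpow] at hle
  linarith

lemma IsBalanced.integral_mul_inner_eq_zero (hs : 0 < s) (hF : Admissible (surfaceMeasure E) F)
    (h : IsBalanced s F) (e : E) : ∫ ω, F ω * ⟪(ω : E), e⟫ ∂(surfaceMeasure E) = 0 := by
  set k' : ℝ × sphere (0 : E) 1 → ℝ :=
    fun z ↦ ⟪z.1 • e, e⟫ / lorentzFactor (z.1 • e) - ⟪(z.2 : E), e⟫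
  have hk : Continuous fun z : ℝ × sphere (0 : E) 1 ↦ boostFactor (z.1 • e) z.2 :=
    continuous_boostFactor_uncurry.comp
      ((continuous_fst.smul continuous_const).prodMk continuous_snd)
  have hk_ne (z : ℝ × sphere (0 : E) 1) : boostFactor (z.1 • e) z.2 ≠ 0 :=
    (boostFactor_pos _ _).ne'
  have hk' : Continuous k' := by
    have hlorentz : Continuous fun z : ℝ × sphere (0 : E) 1 ↦ lorentzFactor (z.1 • e) := by
      unfold lorentzFactor
      fun_prop
    exact (Continuous.div (by fun_prop) hlorentz fun z ↦ (lorentzFactor_pos _).ne').sub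
      (by fun_prop)
  have hderiv := hasDerivAt_integral_mul_of_continuous hF.integrable
    (K := fun z ↦ boostFactor (z.1 • e) z.2 ^ (s / 2))
    (K' := fun z ↦ k' z * (s / 2) * boostFactor (z.1 • e) z.2 ^ (s / 2 - 1))
    (hk.rpow_const fun z ↦ .inl (hk_ne z))
    ((hk'.mul_const _).mul (hk.rpow_const fun z ↦ .inl (hk_ne z)))
    (fun t ω ↦ (hasDerivAt_boostFactor_smul e ω t).rpow_const (.inl (hk_ne (t, ω)))) 0
  have hmin : IsLocalMin (fun t : ℝ ↦ boostedMass s F (t • e)) 0 :=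
    .of_forall fun t ↦ by simpa only [zero_smul, boostedMass_zero] using h (t • e)
  have hzero := hmin.hasDerivAt_eq_zero hderiv
  have hintegrand ω : F ω * (k' (0, ω) * (s / 2) * boostFactor ((0 : ℝ) • e) ω ^ (s / 2 - 1)) =
      -(s / 2) * (F ω * ⟪(ω : E), e⟫) := by
    simp only [k', zero_smul, inner_zero_left, zero_div, boostFactor_zero, Real.one_rpow]
    ring
  simp only [hintegrand, integral_const_mul] at hzero
  exact (mul_eq_zero.1 hzero).resolve_left (by linarith)

variable [Nontrivial E] [NullSingletonClass (surfaceMeasure E)]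

lemma tendsto_boostedMass_cocompact (hs : 0 < s) (hF : Admissible (surfaceMeasure E) F) :
    Filter.Tendsto (boostedMass s F) (Filter.cocompact E) Filter.atTop := by
  have : Nonempty (sphere (0 : E) 1) := (NormedSpace.sphere_nonempty.2 zero_le_one).to_subtype
  obtain ⟨ξ₀, hξ₀⟩ := (continuous_rieszPotential hs.le
    hF.integrable).exists_forall_le_of_hasCompactSupport (.of_compactSpace _)
  have hlim : Filter.Tendsto (fun w : E ↦ (‖w‖ / 2) ^ (s / 2) *
      rieszPotential (surfaceMeasure E) s F ξ₀) (Filter.cocompact E) Filter.atTop :=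
    ((tendsto_rpow_atTop (by positivity)).comp
      (tendsto_norm_cocompact_atTop.atTop_div_const two_pos)).atTop_mul_const
      (hF.rieszPotential_pos hs.le ξ₀)
  refine Filter.tendsto_atTop_mono' _ ?_ hlim
  filter_upwards [(isCompact_singleton (x := (0 : E))).compl_mem_cocompact] with w hw
  have hnorm : ‖w‖ ≠ 0 := norm_ne_zero_iff.2 hw
  have hle := mul_rieszPotential_le_boostedMass hs.le hF (norm_nonneg w)
    ⟨‖w‖⁻¹ • w, by simp [norm_smul, hnorm]⟩
  rw [smul_inv_smul₀ hnorm] at hle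
  exact (mul_le_mul_of_nonneg_left (hξ₀ _) (by positivity)).trans hle

lemma exists_isBalanced_conformalTransform (hs : 0 < s) (hF : Admissible (surfaceMeasure E) F) :
    ∃ v : E, IsBalanced s (conformalTransform s v F) := by
  obtain ⟨m, hm⟩ := (continuous_boostedMass hs.le hF.integrable).exists_forall_le
    (tendsto_boostedMass_cocompact hs hF)
  have hrest : boostSpace (-m) (lorentzFactor (0 : E)) 0 = m := by simp [boostSpace, lorentzFactor]
  refine ⟨-m, fun w ↦ ?_⟩
  rw [← boostedMass_zero s, boostedMass_conformalTransform, boostedMass_conformalTransform, hrest]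
  exact hm _

end Balancing

section SphereMinimizers

variable {E : Type*} [NormedAddCommGroup E] [InnerProductSpace ℝ E] [FiniteDimensional ℝ E]
  [MeasurableSpace E] [BorelSpace E] {s p q : ℝ} {F : sphere (0 : E) 1 → ℝ}

omit [FiniteDimensional ℝ E] [MeasurableSpace E] [BorelSpace E] in
lemma real_inner_reflection_orthogonal_span_singleton (e x y : E) :
    ⟪x, (ℝ ∙ e)ᗮ.reflection y⟫ = ⟪x, y⟫ - 2 * (⟪x, e⟫ * ⟪y, e⟫ / ‖e‖ ^ 2) := by
  rw [Submodule.reflection_orthogonal_apply, Submodule.reflection_singleton_apply, neg_sub,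
    inner_sub_right, two_smul, inner_add_right, real_inner_smul_right, real_inner_comm y e]
  simp only [RCLike.ofReal_real_eq_id, id_eq]
  ring

lemma isReflection_unitSphereIsometry_reflection {e : E} (he : e ≠ 0) :
    IsReflection (surfaceMeasure E) (unitSphereIsometry (ℝ ∙ e)ᗮ.reflection)
      fun ω ↦ 2 / ‖e‖ * ⟪(ω : E), e⟫ where
  continuous := by fun_prop
  involutive ω := Subtype.ext (Submodule.reflection_reflection _ (ω : E))
  measurePreserving := measurePreserving_unitSphereIsometry _
  dist_sq ω ζ := by
    have hinner : ⟪(ω : E), unitSphereIsometry (ℝ ∙ e)ᗮ.reflection ζ⟫ =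
        ⟪(ω : E), ζ⟫ - 2 * (⟪(ω : E), e⟫ * ⟪(ζ : E), e⟫ / ‖e‖ ^ 2) :=
      real_inner_reflection_orthogonal_span_singleton e ω ζ
    rw [dist_sq_eq_two_mul_one_sub_inner, dist_sq_eq_two_mul_one_sub_inner, hinner]
    have := norm_ne_zero_iff.2 he
    field

variable [Nontrivial E]

instance surfaceMeasure.instNeZero : NeZero (surfaceMeasure E) := ⟨volume.toSphere_ne_zero⟩

variable [NullSingletonClass (surfaceMeasure E)]

omit [FiniteDimensional ℝ E] [MeasurableSpace E] [BorelSpace E] [Nontrivial E]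
  [NullSingletonClass (surfaceMeasure E)] in
lemma eq_of_forall_comp_reflection_eq (h : ∀ e : E, e ≠ 0 → ∀ ω,
    F (unitSphereIsometry (ℝ ∙ e)ᗮ.reflection ω) = F ω) (ω ζ : sphere (0 : E) 1) : F ω = F ζ := by
  obtain rfl | hne := eq_or_ne ω ζ
  · rfl
  have hreflect : unitSphereIsometry (ℝ ∙ ((ω : E) - ζ))ᗮ.reflection ω = ζ :=
    Subtype.ext (Submodule.reflection_sub (by simp))
  rw [← h _ (sub_ne_zero.2 (Subtype.coe_ne_coe.2 hne)) ω, hreflect]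

lemma exists_isRieszMinimizer_surfaceMeasure (h : ConformalExponents (finrank ℝ E - 1) s p q) :
    ∃ G, IsRieszMinimizer (surfaceMeasure E) s p q G := by
  refine exists_isRieszMinimizer h.reverseHolderConjugate h.order_pos.le (c := 1 / 4)
    (by norm_num) fun F hF ↦ ?_
  obtain ⟨v, hv⟩ := exists_isBalanced_conformalTransform h.order_pos hF
  have hadmissible := hF.conformalTransform (s := s) v
  refine ⟨_, hadmissible, rieszQuotient_conformalTransform h v F, fun ω ↦ ?_⟩
  linarith [hv.integral_le_four_mul_rieszPotential h.order_pos hadmissible ω]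

namespace IsRieszMinimizer

omit [NullSingletonClass (surfaceMeasure E)] in
lemma conformalTransform (h : ConformalExponents (finrank ℝ E - 1) s p q)
    (hF : IsRieszMinimizer (surfaceMeasure E) s p q F) (v : E) :
    IsRieszMinimizer (surfaceMeasure E) s p q (conformalTransform s v F) :=
  ⟨hF.1.conformalTransform v, fun G hG ↦
    (rieszQuotient_conformalTransform h v F).le.trans (hF.2 G hG)⟩

lemma exists_ae_eq_const_of_isBalanced (hpq : ReverseHolderConjugate p q) (hs : 0 < s)
    (hF : IsRieszMinimizer (surfaceMeasure E) s p q F) (hbalanced : IsBalanced s F) :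
    ∃ a, 0 < a ∧ F =ᵐ[surfaceMeasure E] fun _ ↦ a := by
  have hdual := hF.1.admissible_dualFunction (q := q) hs.le
  set F' := dualFunction (surfaceMeasure E) s q (dualFunction (surfaceMeasure E) s q F)
  obtain ⟨c, hc, hae⟩ : ∃ c, 0 < c ∧ F =ᵐ[surfaceMeasure E] fun ω ↦ c * F' ω :=
    hF.exists_ae_eq_const_mul_dualFunction_dualFunction hpq hs.le
  have hcenter (e : E) : ∫ ω, F' ω * ⟪(ω : E), e⟫ ∂(surfaceMeasure E) = 0 := by
    have hzero : ∫ ω, c * F' ω * ⟪(ω : E), e⟫ ∂(surfaceMeasure E) = 0 :=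
      (integral_congr_ae (by filter_upwards [hae] with ω hω; rw [hω])).trans
        (hbalanced.integral_mul_inner_eq_zero hs hF.1 e)
    simp only [mul_assoc, integral_const_mul] at hzero
    exact (mul_eq_zero.1 hzero).resolve_left hc.ne'
  have hmoment (e : E) : ∫ ω, F' ω * (2 / ‖e‖ * ⟪(ω : E), e⟫) ∂(surfaceMeasure E) = 0 := by
    simp only [mul_left_comm _ (2 / ‖e‖), integral_const_mul, hcenter, mul_zero]
  have hconst := eq_of_forall_comp_reflection_eq (F := F') fun e he ↦
    (hF.dualFunction_dualFunction hpq hs.le).comp_reflection_eq hpq hs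
      (hdual.continuous_dualFunction hs.le) (isReflection_unitSphereIsometry_reflection he)
      (hmoment e)
  obtain ⟨ω₀, hω₀⟩ : (sphere (0 : E) 1).Nonempty := NormedSpace.sphere_nonempty.2 zero_le_one
  exact ⟨c * F' ⟨ω₀, hω₀⟩, mul_pos hc (hdual.dualFunction_pos hs.le _),
    hae.trans (.of_forall fun ω ↦ congrArg (c * ·) (hconst ω _))⟩

lemma exists_ae_eq_const_mul_boostFactor_rpow (h : ConformalExponents (finrank ℝ E - 1) s p q)
    (hF : IsRieszMinimizer (surfaceMeasure E) s p q F) :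
    ∃ a, 0 < a ∧ ∃ v : E, F =ᵐ[surfaceMeasure E]
      fun ω ↦ a * boostFactor v ω ^ (1 - finrank ℝ E - s / 2 : ℝ) := by
  obtain ⟨v, hv⟩ := exists_isBalanced_conformalTransform h.order_pos hF.1
  obtain ⟨a, ha, hae⟩ := (hF.conformalTransform h v).exists_ae_eq_const_of_isBalanced
    h.reverseHolderConjugate h.order_pos hv
  refine ⟨a, ha, -v, ae_of_ae_comp_mobius v ?_⟩
  filter_upwards [hae] with ω hω
  rw [← hω, _root_.conformalTransform, mul_assoc, ← Real.mul_rpow (boostFactor_pos _ _).le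
    (boostFactor_pos _ _).le, boostFactor_mul_boostFactor_neg, Real.one_rpow, mul_one]

end IsRieszMinimizer

omit [NullSingletonClass (surfaceMeasure E)] in
lemma rieszQuotient_const_mul_boostFactor_rpow (h : ConformalExponents (finrank ℝ E - 1) s p q)
    {a : ℝ} (ha : a ≠ 0) (v : E) :
    rieszQuotient (surfaceMeasure E) s p q
        (fun ω ↦ a * boostFactor v ω ^ (1 - finrank ℝ E - s / 2 : ℝ)) =
      rieszQuotient (surfaceMeasure E) s p q fun _ ↦ 1 := by
  rw [rieszQuotient_const_mul h.reverseHolderConjugate ha]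
  convert rieszQuotient_conformalTransform h v fun _ ↦ 1 using 2
  ext ω
  rw [conformalTransform, one_mul]

lemma isRieszMinimizer_one (h : ConformalExponents (finrank ℝ E - 1) s p q) :
    IsRieszMinimizer (surfaceMeasure E) s p q fun _ ↦ 1 := by
  obtain ⟨G, hG⟩ := exists_isRieszMinimizer_surfaceMeasure h
  obtain ⟨a, ha, v, hae⟩ := hG.exists_ae_eq_const_mul_boostFactor_rpow h
  refine ⟨.of_continuous continuous_const fun _ ↦ one_pos, fun H hH ↦ ?_⟩
  rw [← rieszQuotient_const_mul_boostFactor_rpow h ha.ne' v, ← rieszQuotient_congr hae]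
  exact hG.2 H hH

lemma rieszQuotient_eq_rieszQuotient_one_iff (h : ConformalExponents (finrank ℝ E - 1) s p q)
    (hF : Admissible (surfaceMeasure E) F) :
    rieszQuotient (surfaceMeasure E) s p q F = rieszQuotient (surfaceMeasure E) s p q (fun _ ↦ 1) ↔
      ∃ a, 0 < a ∧ ∃ v : E, F =ᵐ[surfaceMeasure E]
        fun ω ↦ a * boostFactor v ω ^ (1 - finrank ℝ E - s / 2 : ℝ) := by
  refine ⟨fun heq ↦ IsRieszMinimizer.exists_ae_eq_const_mul_boostFactor_rpow h
    ⟨hF, fun G hG ↦ heq.le.trans ((isRieszMinimizer_one h).2 G hG)⟩, ?_⟩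
  rintro ⟨a, ha, v, hae⟩
  rw [rieszQuotient_congr hae, rieszQuotient_const_mul_boostFactor_rpow h ha.ne']

end SphereMinimizers

section HyperbolicSubstitution

variable {b : ℝ}

lemma sqrt_sq_half_div_sub_add (hb : 0 < b) {w : ℝ} (hw : 0 < w) :
    √(((b / w - w) / 2) ^ 2 + b) = (b / w + w) / 2 := by
  rw [Real.sqrt_eq_iff_mul_self_eq (by positivity) (by positivity)]
  field

lemma sqrt_sq_add_sub_pos (hb : 0 < b) (t : ℝ) : 0 < √(t ^ 2 + b) - t :=
  sub_pos.2 (Real.lt_sqrt_of_sq_lt (by linarith))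

lemma div_sqrt_sq_add_sub (hb : 0 < b) (t : ℝ) :
    b / (√(t ^ 2 + b) - t) = √(t ^ 2 + b) + t := by
  rw [div_eq_iff (sqrt_sq_add_sub_pos hb t).ne']
  linarith [Real.sq_sqrt (by positivity : 0 ≤ t ^ 2 + b)]

lemma image_half_div_sub_Ioi (hb : 0 < b) :
    (fun w : ℝ ↦ (b / w - w) / 2) '' Set.Ioi 0 = Set.univ := by
  refine Set.eq_univ_of_forall fun t ↦ ⟨√(t ^ 2 + b) - t, sqrt_sq_add_sub_pos hb t, ?_⟩
  simp only [div_sqrt_sq_add_sub hb]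
  ring

lemma strictAntiOn_half_div_sub (hb : 0 < b) :
    StrictAntiOn (fun w : ℝ ↦ (b / w - w) / 2) (Set.Ioi 0) := fun x hx y _ hxy ↦ by
  have : b / y < b / x := div_lt_div_of_pos_left hb hx hxy
  simp only
  linarith

lemma hasDerivAt_half_div_sub (b : ℝ) {w : ℝ} (hw : w ≠ 0) :
    HasDerivAt (fun w : ℝ ↦ (b / w - w) / 2) (-((b / w + w) / 2 * w⁻¹)) w := by
  convert! (((hasDerivAt_inv hw).const_mul b).sub (hasDerivAt_id w)).div_const 2 using 1
  field

lemma lintegral_inv_sqrt_mul_comp_sqrt_sub (hb : 0 < b) (f : ℝ → ℝ≥0∞) :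
    ∫⁻ t : ℝ, ENNReal.ofReal (√(t ^ 2 + b))⁻¹ * f (√(t ^ 2 + b) - t) =
      ∫⁻ w in Set.Ioi (0 : ℝ), ENNReal.ofReal w⁻¹ * f w := by
  rw [← setLIntegral_univ, ← image_half_div_sub_Ioi hb,
    lintegral_image_eq_lintegral_abs_deriv_mul measurableSet_Ioi
      (fun w hw ↦ (hasDerivAt_half_div_sub b (ne_of_gt hw)).hasDerivWithinAt)
      (strictAntiOn_half_div_sub hb).injOn]
  refine setLIntegral_congr_fun measurableSet_Ioi fun w (hw : 0 < w) ↦ ?_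
  have hne : (b / w + w) / 2 ≠ 0 := by positivity
  rw [sqrt_sq_half_div_sub_add hb hw, abs_neg, abs_of_pos (by positivity), ← mul_assoc,
    ← ENNReal.ofReal_mul (by positivity), mul_right_comm, mul_inv_cancel₀ hne, one_mul]
  congr 2
  ring

lemma lintegral_sqrt_sub_rpow_mul_exp_div (hb : 0 < b) (σ : ℝ) :
    ∫⁻ t : ℝ, ENNReal.ofReal
        ((√(t ^ 2 + b) - t) ^ σ * Real.exp (-√(t ^ 2 + b)) / √(t ^ 2 + b)) =
      ∫⁻ w in Set.Ioi (0 : ℝ), ENNReal.ofReal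
        (w ^ (σ - 1) * Real.exp (-(1 / 2 * w)) * Real.exp (-(1 / (2 * w)) * b)) := by
  have hleft (t : ℝ) : ENNReal.ofReal
      ((√(t ^ 2 + b) - t) ^ σ * Real.exp (-√(t ^ 2 + b)) / √(t ^ 2 + b)) =
      ENNReal.ofReal (√(t ^ 2 + b))⁻¹ * ENNReal.ofReal ((√(t ^ 2 + b) - t) ^ σ *
        Real.exp (-((b / (√(t ^ 2 + b) - t) + (√(t ^ 2 + b) - t)) / 2))) := by
    rw [div_sqrt_sq_add_sub hb, ← ENNReal.ofReal_mul (by positivity), div_eq_inv_mul]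
    ring_nf
  rw [lintegral_congr hleft, lintegral_inv_sqrt_mul_comp_sqrt_sub hb fun w ↦
    ENNReal.ofReal (w ^ σ * Real.exp (-((b / w + w) / 2)))]
  refine setLIntegral_congr_fun measurableSet_Ioi fun w (hw : 0 < w) ↦ ?_
  have hexponent : -(1 / 2 * w) + -(1 / (2 * w)) * b = -((b / w + w) / 2) := by ring
  rw [mul_assoc, ← Real.exp_add, hexponent, ← ENNReal.ofReal_mul (by positivity),
    Real.rpow_sub_one hw.ne']
  ring_nf

end HyperbolicSubstitution

section GaussianIntegral

lemma lintegral_rpow_mul_exp_neg_mul_Ioi {a r : ℝ} (ha : 0 < a) (hr : 0 < r) :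
    ∫⁻ w in Set.Ioi (0 : ℝ), ENNReal.ofReal (w ^ (a - 1) * Real.exp (-(r * w))) =
      ENNReal.ofReal ((1 / r) ^ a * Real.Gamma a) := by
  rw [← Real.integral_rpow_mul_exp_neg_mul_Ioi ha hr, ofReal_integral_eq_lintegral_ofReal]
  · refine .of_integral_ne_zero ?_
    rw [Real.integral_rpow_mul_exp_neg_mul_Ioi ha hr]
    have := Real.Gamma_pos_of_pos ha
    positivity
  · filter_upwards [self_mem_ae_restrict measurableSet_Ioi] with w (hw : 0 < w)
    simp only [Pi.zero_apply]
    positivity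

lemma lintegral_rexp_neg_mul_sq_norm {V : Type*} [NormedAddCommGroup V] [InnerProductSpace ℝ V]
    [FiniteDimensional ℝ V] [MeasurableSpace V] [BorelSpace V] {b : ℝ} (hb : 0 < b) :
    ∫⁻ y : V, ENNReal.ofReal (Real.exp (-b * ‖y‖ ^ 2)) =
      ENNReal.ofReal ((Real.pi / b) ^ (finrank ℝ V / 2 : ℝ)) := by
  rw [← GaussianFourier.integral_rexp_neg_mul_sq_norm hb, ofReal_integral_eq_lintegral_ofReal]
  · refine .of_integral_ne_zero ?_
    rw [GaussianFourier.integral_rexp_neg_mul_sq_norm hb]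
    positivity
  · exact .of_forall fun _ ↦ (Real.exp_pos _).le

lemma lintegral_rpow_mul_exp_mul_rexp_neg_mul_sq_norm {V : Type*} [NormedAddCommGroup V]
    [InnerProductSpace ℝ V] [FiniteDimensional ℝ V] [MeasurableSpace V] [BorelSpace V] (σ : ℝ)
    {w : ℝ} (hw : 0 < w) :
    ∫⁻ y : V, ENNReal.ofReal
        (w ^ (σ - 1) * Real.exp (-(1 / 2 * w)) * Real.exp (-(1 / (2 * w)) * ‖y‖ ^ 2)) =
      ENNReal.ofReal ((2 * Real.pi) ^ (finrank ℝ V / 2 : ℝ)) *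
        ENNReal.ofReal (w ^ (σ + finrank ℝ V / 2 - 1) * Real.exp (-(1 / 2 * w))) := by
  have hweight : 0 ≤ w ^ (σ - 1) * Real.exp (-(1 / 2 * w)) := by positivity
  simp_rw [ENNReal.ofReal_mul hweight]
  rw [lintegral_const_mul _ (by fun_prop), lintegral_rexp_neg_mul_sq_norm (by positivity),
    ← ENNReal.ofReal_mul hweight, ← ENNReal.ofReal_mul (by positivity)]
  congr 1
  rw [show Real.pi / (1 / (2 * w)) = 2 * Real.pi * w by field, Real.mul_rpow (by positivity) hw.le,
    add_sub_right_comm, Real.rpow_add hw]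
  ring

end GaussianIntegral

lemma rieszQuotient_one_of_rieszPotential_eq {X : Type*} [MetricSpace X] [MeasurableSpace X]
    {μ : Measure X} [IsFiniteMeasure μ] [NeZero μ] {s p q c : ℝ} (h : ReverseHolderConjugate p q)
    (hc : 0 < c) (hpot : ∀ x, rieszPotential μ s (fun _ ↦ 1) x = c) :
    rieszQuotient μ s p q (fun _ ↦ 1) = c * μ.real Set.univ ^ (1 / q - 1 / p) := by
  have hμ : 0 < μ.real Set.univ := measureReal_univ_pos
  simp only [rieszQuotient, lpQuasinorm, hpot, abs_one, abs_of_pos hc, integral_const,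
    Real.one_rpow, smul_eq_mul, mul_one]
  rw [Real.mul_rpow hμ.le (by positivity), one_div, Real.rpow_rpow_inv hc.le h.neg.ne, ← one_div,
    mul_comm, mul_div_assoc, ← Real.rpow_sub hμ]

lemma ConformalExponents.one_div_sub_one_div {d s p q : ℝ} (h : ConformalExponents d s p q) :
    1 / q - 1 / p = -((d + s) / d) := by
  have hd := h.dim_pos.ne'
  have hp : 1 / p = (d + s / 2) / d := by
    rw [div_eq_div_iff h.reverseHolderConjugate.pos.ne' hd, h.add_mul_eq, one_mul]
  have hq : 1 / q = -(s / 2) / d := by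
    rw [div_eq_div_iff h.reverseHolderConjugate.neg.ne hd, neg_mul, h.mul_eq_neg, one_mul, neg_neg]
  rw [hp, hq]
  field

section SphereIntegrals

lemma lintegral_volumeIoiPow (m : ℕ) {f : ℝ → ℝ≥0∞} (hf : Measurable f) :
    ∫⁻ r : Set.Ioi (0 : ℝ), f r ∂(Measure.volumeIoiPow m) =
      ∫⁻ r in Set.Ioi (0 : ℝ), ENNReal.ofReal (r ^ m) * f r := by
  rw [Measure.volumeIoiPow, lintegral_withDensity_eq_lintegral_mul _ (by fun_prop) (by fun_prop),
    ← lintegral_subtype_comap measurableSet_Ioi]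
  rfl

variable {E : Type*} [NormedAddCommGroup E] [InnerProductSpace ℝ E] [FiniteDimensional ℝ E]
  [MeasurableSpace E] [BorelSpace E] {n : ℕ} {s p q : ℝ} (hE : finrank ℝ E = n + 1)

include hE

omit [MeasurableSpace E] [BorelSpace E] in
lemma exists_orthonormalBasis_apply_zero_eq (e : sphere (0 : E) 1) :
    ∃ b : OrthonormalBasis (Fin (n + 1)) ℝ E, b 0 = e := by
  have horth : Orthonormal ℝ (({0} : Set (Fin (n + 1))).domRestrict fun _ ↦ (e : E)) :=
    ⟨fun _ ↦ norm_eq_of_mem_sphere e, fun _ _ hne ↦ (hne (Subsingleton.elim _ _)).elim⟩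
  obtain ⟨b, hb⟩ := horth.exists_orthonormalBasis_extension_of_card_eq (by simpa using hE)
  exact ⟨b, hb 0 rfl⟩

lemma lintegral_inner_norm_eq_lintegral_lintegral (e : sphere (0 : E) 1) {g : ℝ → ℝ → ℝ≥0∞}
    (hg : Measurable (Function.uncurry g)) :
    ∫⁻ x : E, g ⟪(e : E), x⟫ ‖x‖ =
      ∫⁻ y : EuclideanSpace ℝ (Fin n), ∫⁻ t : ℝ, g t √(t ^ 2 + ‖y‖ ^ 2) := by
  obtain ⟨b, hb⟩ := exists_orthonormalBasis_apply_zero_eq hE e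
  have hcoord := EuclideanSpace.volume_preserving_symm_measurableEquiv_toLp (Fin (n + 1))
  have hsplit := volume_preserving_piFinSuccAbove (fun _ : Fin (n + 1) ↦ ℝ) 0
  have hcoord' := EuclideanSpace.volume_preserving_symm_measurableEquiv_toLp (Fin n)
  have hnorm (x : E) : ‖x‖ = √(b.repr x 0 ^ 2 + ∑ i : Fin n, b.repr x i.succ ^ 2) := by
    rw [← b.repr.norm_map, EuclideanSpace.norm_eq, Fin.sum_univ_succ]
    simp
  have hmeas : Measurable fun z : ℝ × (Fin n → ℝ) ↦ g z.1 √(z.1 ^ 2 + ∑ i, z.2 i ^ 2) :=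
    hg.comp (measurable_fst.prodMk (by fun_prop))
  calc ∫⁻ x : E, g ⟪(e : E), x⟫ ‖x‖
      = ∫⁻ z : ℝ × (Fin n → ℝ), g z.1 √(z.1 ^ 2 + ∑ i, z.2 i ^ 2) := by
        rw [← ((hsplit.comp hcoord).comp b.measurePreserving_repr).lintegral_comp hmeas]
        refine lintegral_congr fun x ↦ ?_
        rw [hnorm, ← hb, ← b.repr_apply_apply]
        rfl
    _ = ∫⁻ y : Fin n → ℝ, ∫⁻ t : ℝ, g t √(t ^ 2 + ∑ i, y i ^ 2) := by
        rw [Measure.volume_eq_prod, lintegral_prod_symm' _ hmeas]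
    _ = _ := by
        rw [← hcoord'.lintegral_comp hmeas.lintegral_prod_left']
        simp only [EuclideanSpace.norm_sq_eq, Real.norm_eq_abs, sq_abs]
        rfl

lemma lintegral_norm_sub_inner_rpow_mul_exp_div (hn : 1 ≤ n) (e : sphere (0 : E) 1) {σ : ℝ}
    (hσ : 0 < σ) :
    ∫⁻ x : E, ENNReal.ofReal ((‖x‖ - ⟪(e : E), x⟫) ^ σ * Real.exp (-‖x‖) / ‖x‖) =
      ENNReal.ofReal ((2 * Real.pi) ^ (n / 2 : ℝ) *
        (2 ^ (σ + n / 2) * Real.Gamma (σ + n / 2))) := by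
  have : Nonempty (Fin n) := ⟨⟨0, hn⟩⟩
  have hslice : ∀ᵐ y : EuclideanSpace ℝ (Fin n), ∫⁻ t : ℝ, ENNReal.ofReal
      ((√(t ^ 2 + ‖y‖ ^ 2) - t) ^ σ * Real.exp (-√(t ^ 2 + ‖y‖ ^ 2)) / √(t ^ 2 + ‖y‖ ^ 2)) =
      ∫⁻ w in Set.Ioi (0 : ℝ), ENNReal.ofReal
        (w ^ (σ - 1) * Real.exp (-(1 / 2 * w)) * Real.exp (-(1 / (2 * w)) * ‖y‖ ^ 2)) := by
    filter_upwards [Measure.ae_ne volume 0] with y hy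
    exact lintegral_sqrt_sub_rpow_mul_exp_div (by positivity) σ
  rw [lintegral_inner_norm_eq_lintegral_lintegral hE e
    (g := fun t r ↦ ENNReal.ofReal ((r - t) ^ σ * Real.exp (-r) / r))
    (by unfold Function.uncurry; fun_prop), lintegral_congr_ae hslice,
    lintegral_lintegral_swap (by unfold Function.uncurry; fun_prop),
    setLIntegral_congr_fun measurableSet_Ioi fun w hw ↦
      lintegral_rpow_mul_exp_mul_rexp_neg_mul_sq_norm σ hw,
    lintegral_const_mul _ (by fun_prop)]
  simp only [finrank_euclideanSpace_fin]
  rw [lintegral_rpow_mul_exp_neg_mul_Ioi (by positivity) (by norm_num),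
    ← ENNReal.ofReal_mul (by positivity)]
  norm_num

omit [FiniteDimensional ℝ E] [MeasurableSpace E] [BorelSpace E] hE in
lemma inner_le_one_of_mem_sphere (e ω : sphere (0 : E) 1) : ⟪(e : E), ω⟫ ≤ 1 := by
  simpa using real_inner_le_norm (e : E) ω

omit [FiniteDimensional ℝ E] [MeasurableSpace E] [BorelSpace E] hE in
lemma lintegral_volumeIoiPow_norm_sub_inner_rpow_mul_exp_div (e ω : sphere (0 : E) 1) {σ : ℝ}
    (hσ : 0 < n + σ) :
    ∫⁻ r : Set.Ioi (0 : ℝ), ENNReal.ofReal ((‖r.1 • ω.1‖ - ⟪(e : E), r.1 • ω.1⟫) ^ σ *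
        Real.exp (-‖r.1 • ω.1‖) / ‖r.1 • ω.1‖) ∂(Measure.volumeIoiPow n) =
      ENNReal.ofReal (Real.Gamma (n + σ) * (1 - ⟪(e : E), ω⟫) ^ σ) := by
  have hle : 0 ≤ 1 - ⟪(e : E), ω⟫ := sub_nonneg.2 (inner_le_one_of_mem_sphere e ω)
  have hray (r : Set.Ioi (0 : ℝ)) : (‖r.1 • ω.1‖ - ⟪(e : E), r.1 • ω.1⟫) ^ σ *
      Real.exp (-‖r.1 • ω.1‖) / ‖r.1 • ω.1‖ =
      (r.1 * (1 - ⟪(e : E), ω⟫)) ^ σ * Real.exp (-r.1) / r.1 := by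
    rw [norm_smul, norm_eq_of_mem_sphere, mul_one, Real.norm_of_nonneg (le_of_lt r.2),
      real_inner_smul_right, ← mul_one_sub]
  have hfactor : ∀ r ∈ Set.Ioi (0 : ℝ), ENNReal.ofReal (r ^ n) * ENNReal.ofReal
      ((r * (1 - ⟪(e : E), ω⟫)) ^ σ * Real.exp (-r) / r) =
      ENNReal.ofReal ((1 - ⟪(e : E), ω⟫) ^ σ) *
        ENNReal.ofReal (r ^ (n + σ - 1) * Real.exp (-(1 * r))) := fun r (hr : 0 < r) ↦ by
    rw [Real.mul_rpow hr.le hle, ← ENNReal.ofReal_mul (by positivity),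
      ← ENNReal.ofReal_mul (by positivity), Real.rpow_sub_one hr.ne', Real.rpow_add hr,
      Real.rpow_natCast, one_mul]
    ring_nf
  simp only [hray]
  rw [lintegral_volumeIoiPow n (f := fun r ↦ ENNReal.ofReal
      ((r * (1 - ⟪(e : E), ω⟫)) ^ σ * Real.exp (-r) / r)) (by fun_prop),
    setLIntegral_congr_fun measurableSet_Ioi hfactor, lintegral_const_mul _ (by fun_prop),
    lintegral_rpow_mul_exp_neg_mul_Ioi hσ one_pos, ← ENNReal.ofReal_mul (by positivity)]
  simp [mul_comm]

lemma Gamma_mul_integral_one_sub_inner_rpow (hn : 1 ≤ n) (e : sphere (0 : E) 1) {σ : ℝ}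
    (hσ : 0 < σ) :
    Real.Gamma (n + σ) * ∫ ω : sphere (0 : E) 1, (1 - ⟪(e : E), ω⟫) ^ σ ∂(surfaceMeasure E) =
      (2 * Real.pi) ^ (n / 2 : ℝ) * (2 ^ (σ + n / 2) * Real.Gamma (σ + n / 2)) := by
  have : Nontrivial E := Module.nontrivial_of_finrank_pos (R := ℝ) (by lia)
  have hGamma : 0 < Real.Gamma (n + σ) := Real.Gamma_pos_of_pos (by positivity)
  have hnonneg (ω : sphere (0 : E) 1) : 0 ≤ (1 - ⟪(e : E), ω⟫) ^ σ :=
    Real.rpow_nonneg (sub_nonneg.2 (inner_le_one_of_mem_sphere e ω)) σ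
  have hcont : Continuous fun ω : sphere (0 : E) 1 ↦ (1 - ⟪(e : E), ω⟫) ^ σ :=
    Continuous.rpow_const (by fun_prop) fun _ ↦ .inr hσ.le
  have hpolar := lintegral_norm_sub_inner_rpow_mul_exp_div hE hn e hσ
  rw [lintegral_eq_lintegral_toSphere_volumeIoiPow _ (by fun_prop), hE, add_tsub_cancel_right,
    lintegral_congr fun ω ↦
      lintegral_volumeIoiPow_norm_sub_inner_rpow_mul_exp_div e ω (by positivity),
    ← ofReal_integral_eq_lintegral_ofReal ((integrable_of_continuous hcont).const_mul _)
      (.of_forall fun ω ↦ mul_nonneg hGamma.le (hnonneg ω)), integral_const_mul] at hpolar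
  have := Real.Gamma_pos_of_pos (show 0 < σ + n / 2 by positivity)
  exact (ENNReal.ofReal_eq_ofReal_iff (mul_nonneg hGamma.le (integral_nonneg hnonneg))
    (by positivity)).1 hpolar

lemma rieszPotential_one (hn : 1 ≤ n) (hs : 0 < s) (e : sphere (0 : E) 1) :
    rieszPotential (surfaceMeasure E) s (fun _ ↦ 1) e = 2 ^ (n + s) * Real.pi ^ (n / 2 : ℝ) *
      (Real.Gamma ((n + s) / 2) / Real.Gamma (n + s / 2)) := by
  have hGamma : 0 < Real.Gamma (n + s / 2) := Real.Gamma_pos_of_pos (by positivity)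
  have hkernel : rieszPotential (surfaceMeasure E) s (fun _ ↦ 1) e =
      2 ^ (s / 2) * ∫ ω : sphere (0 : E) 1, (1 - ⟪(e : E), ω⟫) ^ (s / 2) ∂(surfaceMeasure E) := by
    rw [rieszPotential, ← integral_const_mul]
    refine integral_congr_ae (.of_forall fun ω ↦ ?_)
    simp only [one_mul]
    rw [dist_rpow_eq_sq_rpow_half, dist_sq_eq_two_mul_one_sub_inner,
      Real.mul_rpow two_pos.le (sub_nonneg.2 (inner_le_one_of_mem_sphere e ω))]
  have hintegral := Gamma_mul_integral_one_sub_inner_rpow hE hn e (half_pos hs)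
  rw [mul_comm, ← eq_div_iff hGamma.ne'] at hintegral
  rw [hkernel, hintegral, Real.mul_rpow two_pos.le Real.pi_pos.le,
    show (n + s) / 2 = s / 2 + n / 2 by ring,
    show n + s = s / 2 + (n / 2 + (s / 2 + n / 2)) by ring]
  simp only [Real.rpow_add two_pos]
  ring

lemma surfaceMeasure_real_univ (hn : 1 ≤ n) :
    (surfaceMeasure E).real Set.univ =
      2 ^ (n : ℝ) * Real.pi ^ (n / 2 : ℝ) * (Real.Gamma (n / 2) / Real.Gamma n) := by
  have : Nontrivial E := Module.nontrivial_of_finrank_pos (R := ℝ) (by lia)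
  have hGamma : 0 < Real.Gamma (n / 2) := Real.Gamma_pos_of_pos (by positivity)
  have hsqrt : √Real.pi ^ (n + 1) = √Real.pi * Real.pi ^ (n / 2 : ℝ) := by
    rw [pow_succ', Real.sqrt_eq_rpow, ← Real.rpow_natCast, ← Real.rpow_mul Real.pi_pos.le,
      one_div_mul_eq_div]
  have hduplication : Real.Gamma (n / 2 + 1 / 2) =
      Real.Gamma n * (2 / 2 ^ (n : ℝ)) * √Real.pi / Real.Gamma (n / 2) := by
    rw [eq_div_iff hGamma.ne', mul_comm, Real.Gamma_mul_Gamma_add_half,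
      mul_div_cancel₀ _ two_ne_zero, Real.rpow_sub two_pos, Real.rpow_one]
  rw [Measure.toSphere_real_apply_univ, Measure.real, InnerProductSpace.volume_ball, hE,
    show ((n + 1 : ℕ) : ℝ) / 2 + 1 = n / 2 + 1 / 2 + 1 by push_cast; ring,
    Real.Gamma_add_one (by positivity), hduplication, hsqrt, ENNReal.ofReal_one, one_pow, one_mul,
    ENNReal.toReal_ofReal (by positivity)]
  have := Real.Gamma_pos_of_pos (show (0 : ℝ) < n by positivity)
  push_cast
  field

lemma rieszQuotient_one (h : ConformalExponents n s p q) (hn : 1 ≤ n) :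
    rieszQuotient (surfaceMeasure E) s p q (fun _ ↦ 1) =
      Real.pi ^ (-(s / 2)) * (Real.Gamma ((n + s) / 2) / Real.Gamma (n + s / 2)) *
        (Real.Gamma (n / 2) / Real.Gamma n) ^ (-((n + s) / n)) := by
  have hn' : (0 : ℝ) < n := h.dim_pos
  have hs := h.order_pos
  have : Nontrivial E := Module.nontrivial_of_finrank_pos (R := ℝ) (by lia)
  have hGamma : 0 < Real.Gamma (n / 2) / Real.Gamma n :=
    div_pos (Real.Gamma_pos_of_pos (by positivity)) (Real.Gamma_pos_of_pos hn')
  have : 0 < Real.Gamma ((n + s) / 2) / Real.Gamma (n + s / 2) :=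
    div_pos (Real.Gamma_pos_of_pos (by positivity)) (Real.Gamma_pos_of_pos (by positivity))
  have htwo : (2 : ℝ) ^ (n + s) * 2 ^ (n * -((n + s) / n)) = 1 := by
    rw [mul_neg, mul_div_cancel₀ _ hn'.ne', ← Real.rpow_add two_pos, add_neg_cancel,
      Real.rpow_zero]
  have hpi : Real.pi ^ (n / 2 : ℝ) * Real.pi ^ (n / 2 * -((n + s) / n)) =
      Real.pi ^ (-(s / 2)) := by
    rw [← Real.rpow_add Real.pi_pos]
    congr 1
    field
  rw [rieszQuotient_one_of_rieszPotential_eq h.reverseHolderConjugate (by positivity)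
      (rieszPotential_one hE hn hs), h.one_div_sub_one_div, surfaceMeasure_real_univ hE hn,
    Real.mul_rpow (by positivity) hGamma.le, Real.mul_rpow (by positivity) (by positivity),
    ← Real.rpow_mul two_pos.le, ← Real.rpow_mul Real.pi_pos.le, ← hpi]
  linear_combination (Real.pi ^ (n / 2 : ℝ) * Real.pi ^ (n / 2 * -((n + s) / n)) *
    (Real.Gamma ((n + s) / 2) / Real.Gamma (n + s / 2)) *
    (Real.Gamma (n / 2) / Real.Gamma n) ^ (-((n + s) / n))) * htwo

end SphereIntegrals

section NonIntegrable

variable {X : Type*} [MetricSpace X] {s : ℝ}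

lemma dist_div_two_rpow_le_add (hs : 0 ≤ s) (x y z : X) :
    (dist x y / 2) ^ s ≤ dist x z ^ s + dist y z ^ s := by
  have htriangle := dist_triangle_right x y z
  rcases le_total (dist x y / 2) (dist x z) with hx | hx
  · exact le_add_of_le_of_nonneg (by gcongr) (by positivity)
  · exact le_add_of_nonneg_of_le (by positivity) (by gcongr; linarith)

variable [MeasurableSpace X] {μ : Measure X} {F : X → ℝ} (hF : AEStronglyMeasurable F μ)
  (hs : 0 ≤ s)

include hF hs

lemma integrable_of_integrable_mul_dist_rpow {x y : X} (hxy : x ≠ y)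
    (hx : Integrable (fun z ↦ F z * dist x z ^ s) μ)
    (hy : Integrable (fun z ↦ F z * dist y z ^ s) μ) : Integrable F μ := by
  have hc : 0 < (dist x y / 2) ^ s := Real.rpow_pos_of_pos (half_pos (dist_pos.2 hxy)) s
  refine ((hx.norm.add hy.norm).const_mul ((dist x y / 2) ^ s)⁻¹).mono' hF
    (.of_forall fun z ↦ ?_)
  rw [le_inv_mul_iff₀ hc, Pi.add_apply, norm_mul, norm_mul, ← mul_add, mul_comm,
    Real.norm_of_nonneg (by positivity : 0 ≤ dist x z ^ s),
    Real.norm_of_nonneg (by positivity : 0 ≤ dist y z ^ s)]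
  gcongr
  exact dist_div_two_rpow_le_add hs x y z

lemma ae_not_integrable_mul_dist_rpow [NullSingletonClass μ] (hnot : ¬ Integrable F μ) :
    ∀ᵐ x ∂μ, ¬ Integrable (fun y ↦ F y * dist x y ^ s) μ := by
  have hsub : {x | ¬ ¬ Integrable (fun y ↦ F y * dist x y ^ s) μ}.Subsingleton :=
    fun x hx y hy ↦ by_contra fun hxy ↦
      hnot (integrable_of_integrable_mul_dist_rpow hF hs hxy (not_not.1 hx) (not_not.1 hy))
  exact hsub.measure_zero μ

end NonIntegrable

section BoostVelocity

variable {E : Type*} [NormedAddCommGroup E] [InnerProductSpace ℝ E]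

/-- The velocity, in the open unit ball, of the boost with proper velocity `v`; the parameter `η` of
the theorem. -/
noncomputable def boostVelocity (v : E) : E := (lorentzFactor v)⁻¹ • v

lemma norm_boostVelocity_lt_one (v : E) : ‖boostVelocity v‖ < 1 := by
  have hpos := lorentzFactor_pos v
  rw [boostVelocity, norm_smul, norm_inv, Real.norm_of_nonneg hpos.le, inv_mul_lt_one₀ hpos]
  exact norm_lt_lorentzFactor v

lemma exists_boostVelocity_eq {η : E} (hη : ‖η‖ < 1) : ∃ v, boostVelocity v = η := by
  have hsq : 0 < 1 - ‖η‖ ^ 2 := by nlinarith [norm_nonneg η]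
  have ht : 0 < √(1 - ‖η‖ ^ 2) := Real.sqrt_pos.2 hsq
  have htsq : √(1 - ‖η‖ ^ 2) ^ 2 = 1 - ‖η‖ ^ 2 := Real.sq_sqrt hsq.le
  generalize √(1 - ‖η‖ ^ 2) = t at ht htsq
  have hfactor : lorentzFactor (t⁻¹ • η) = t⁻¹ := by
    rw [lorentzFactor, Real.sqrt_eq_iff_eq_sq (by positivity) (by positivity), norm_smul,
      Real.norm_of_nonneg (by positivity)]
    field_simp
    linarith
  exact ⟨t⁻¹ • η, by rw [boostVelocity, hfactor, inv_inv, smul_inv_smul₀ ht.ne']⟩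

lemma boostFactor_rpow_eq_mul_one_sub_inner_boostVelocity_rpow (v : E) (ω : sphere (0 : E) 1)
    (c : ℝ) :
    boostFactor v ω ^ c = lorentzFactor v ^ c * (1 - ⟪(ω : E), boostVelocity v⟫) ^ c := by
  have hpos := lorentzFactor_pos v
  have heq : boostFactor v ω = lorentzFactor v * (1 - ⟪(ω : E), boostVelocity v⟫) := by
    rw [boostVelocity, real_inner_smul_right, boostFactor, mul_sub, mul_one,
      mul_inv_cancel_left₀ hpos.ne']
  have hprod := heq ▸ boostFactor_pos v ω
  rw [heq, Real.mul_rpow hpos.le (pos_of_mul_pos_right hprod hpos.le).le]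

lemma continuous_one_sub_inner_rpow {η : E} (hη : ‖η‖ < 1) (c : ℝ) :
    Continuous fun ω : sphere (0 : E) 1 ↦ (1 - ⟪(ω : E), η⟫) ^ c := by
  refine Continuous.rpow_const (by fun_prop) fun ω ↦ .inl (sub_pos.2 ?_).ne'
  calc ⟪(ω : E), η⟫ ≤ ‖(ω : E)‖ * ‖η‖ := real_inner_le_norm _ _
    _ = ‖η‖ := by rw [norm_eq_of_mem_sphere ω, one_mul]
    _ < 1 := hη

lemma exists_ae_eq_mul_boostFactor_rpow_iff [MeasurableSpace E] {μ : Measure (sphere (0 : E) 1)}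
    {F : sphere (0 : E) 1 → ℝ} {c : ℝ} :
    (∃ a, 0 < a ∧ ∃ v : E, F =ᵐ[μ] fun ω ↦ a * boostFactor v ω ^ c) ↔
      ∃ (a : ℝ) (η : E), 0 < a ∧ ‖η‖ < 1 ∧ ∀ᵐ ω ∂μ, F ω = a * (1 - ⟪(ω : E), η⟫) ^ c := by
  constructor
  · rintro ⟨a, ha, v, hae⟩
    refine ⟨a * lorentzFactor v ^ c, boostVelocity v,
      mul_pos ha (Real.rpow_pos_of_pos (lorentzFactor_pos v) c), norm_boostVelocity_lt_one v, ?_⟩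
    filter_upwards [hae] with ω hω
    rw [hω, boostFactor_rpow_eq_mul_one_sub_inner_boostVelocity_rpow, mul_assoc]
  · rintro ⟨a, η, ha, hη, hae⟩
    obtain ⟨v, rfl⟩ := exists_boostVelocity_eq hη
    have hpow := Real.rpow_pos_of_pos (lorentzFactor_pos v) c
    refine ⟨a / lorentzFactor v ^ c, div_pos ha hpow, v, ?_⟩
    filter_upwards [hae] with ω hω
    rw [hω, boostFactor_rpow_eq_mul_one_sub_inner_boostVelocity_rpow, ← mul_assoc,
      div_mul_cancel₀ _ hpow.ne']

end BoostVelocity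

section SphereRiesz

lemma sphereMeasure_eq_surfaceMeasure (n : ℕ) :
    sphereMeasure n = surfaceMeasure (EuclideanSpace ℝ (Fin (n + 1))) := rfl

instance sphereMeasure.instIsFiniteMeasure (n : ℕ) : IsFiniteMeasure (sphereMeasure n) :=
  inferInstanceAs (IsFiniteMeasure (surfaceMeasure _))

instance sphereMeasure.instNeZero (n : ℕ) : NeZero (sphereMeasure n) :=
  inferInstanceAs (NeZero (surfaceMeasure _))

lemma nullSingletonClass_sphereMeasure {n : ℕ} (hn : 1 ≤ n) :
    NullSingletonClass (sphereMeasure n) :=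
  ⟨toSphere_singleton_of_one_lt_finrank _ (by rw [finrank_euclideanSpace_fin]; lia)⟩

lemma conformalExponents_of_eq_div {n : ℕ} (hn : 1 ≤ n) {α p q : ℝ} (hα : n < α)
    (hp : p = 2 * n / (n + α)) (hq : q = 2 * n / (n - α)) : ConformalExponents n (α - n) p q := by
  have hn' : (0 : ℝ) < n := by positivity
  refine ⟨hn', sub_pos.2 hα, ?_, ?_⟩
  · have : (n : ℝ) + α ≠ 0 := by linarith
    rw [hp]
    field_simp
    ring
  · have := sub_ne_zero.2 hα.ne
    rw [hq]
    field_simp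
    ring

variable {n : ℕ} {α p q : ℝ} {F : sphere (0 : EuclideanSpace ℝ (Fin (n + 1))) 1 → ℝ}

lemma sphereRiesz_eq_ofReal_rieszPotential (hα : n ≤ α) (hF : Integrable F (sphereMeasure n))
    (hFpos : ∀ ξ, 0 ≤ F ξ) (ξ : sphere (0 : EuclideanSpace ℝ (Fin (n + 1))) 1) :
    sphereRiesz n α F ξ = ENNReal.ofReal (rieszPotential (sphereMeasure n) (α - n) F ξ) :=
  (ofReal_integral_eq_lintegral_ofReal (integrable_mul_dist_rpow (sub_nonneg.2 hα) hF ξ)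
    (.of_forall fun η ↦ mul_nonneg (hFpos η) (by positivity))).symm

lemma Admissible.lintegral_sphereRiesz_rpow_eq_ofReal (hn : 1 ≤ n) (hα : n ≤ α)
    (hF : Admissible (sphereMeasure n) F) (q : ℝ) :
    (∫⁻ ξ, sphereRiesz n α F ξ ^ q ∂sphereMeasure n) ^ (1 / q) =
      ENNReal.ofReal (lpQuasinorm (sphereMeasure n) q
        (rieszPotential (sphereMeasure n) (α - n) F)) := by
  have := nullSingletonClass_sphereMeasure hn
  have hs := sub_nonneg.2 hα
  have hpot := hF.rieszPotential_pos hs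
  have hrpow ξ : sphereRiesz n α F ξ ^ q =
      ENNReal.ofReal (rieszPotential (sphereMeasure n) (α - n) F ξ ^ q) := by
    rw [sphereRiesz_eq_ofReal_rieszPotential hα hF.integrable hF.nonneg,
      ENNReal.ofReal_rpow_of_pos (hpot ξ)]
  rw [lintegral_congr hrpow, ← ofReal_integral_eq_lintegral_ofReal
      (integrable_of_continuous (hF.continuous_rieszPotential_rpow hs q))
      (.of_forall fun ξ ↦ Real.rpow_nonneg (hpot ξ).le q),
    ENNReal.ofReal_rpow_of_pos (hF.integral_rieszPotential_rpow_pos hs q),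
    lpQuasinorm_of_nonneg fun ξ ↦ (hpot ξ).le]

lemma ae_sphereRiesz_eq_top (hn : 1 ≤ n) (hα : n ≤ α) (hF : Measurable F) (hFpos : ∀ ξ, 0 ≤ F ξ)
    (hnot : ¬ Integrable F (sphereMeasure n)) :
    ∀ᵐ ξ ∂sphereMeasure n, sphereRiesz n α F ξ = ∞ := by
  have := nullSingletonClass_sphereMeasure hn
  filter_upwards [ae_not_integrable_mul_dist_rpow hF.aestronglyMeasurable (sub_nonneg.2 hα) hnot]
    with ξ hξ
  contrapose! hξ
  exact (lintegral_ofReal_ne_top_iff_integrable (by fun_prop)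
    (.of_forall fun η ↦ mul_nonneg (hFpos η) (by positivity))).1 hξ

lemma lintegral_sphereRiesz_rpow_eq_top (hn : 1 ≤ n) (hα : n ≤ α) (hF : Measurable F)
    (hFpos : ∀ ξ, 0 ≤ F ξ) (hnot : ¬ Integrable F (sphereMeasure n)) (hq : q < 0) :
    (∫⁻ ξ, sphereRiesz n α F ξ ^ q ∂sphereMeasure n) ^ (1 / q) = ∞ := by
  have hzero : ∀ᵐ ξ ∂sphereMeasure n, sphereRiesz n α F ξ ^ q = 0 := by
    filter_upwards [ae_sphereRiesz_eq_top hn hα hF hFpos hnot] with ξ hξ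
    rw [hξ, ENNReal.top_rpow_of_neg hq]
  rw [lintegral_congr_ae hzero, lintegral_zero, ENNReal.zero_rpow_of_neg (one_div_neg.2 hq)]

lemma rieszQuotient_sphereMeasure_one (hn : 1 ≤ n)
    (h : ConformalExponents n (α - n) p q) :
    rieszQuotient (sphereMeasure n) (α - n) p q (fun _ ↦ 1) =
      Real.pi ^ ((n - α) / 2) * (Real.Gamma (α / 2) / Real.Gamma ((n + α) / 2)) *
        (Real.Gamma (n / 2) / Real.Gamma n) ^ (-(α / n)) := by
  rw [sphereMeasure_eq_surfaceMeasure, rieszQuotient_one finrank_euclideanSpace_fin h hn,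
    add_sub_cancel, ← neg_div, neg_sub, show n + (α - n) / 2 = (n + α) / 2 by ring]

lemma Admissible.rieszQuotient_sphereMeasure_eq_iff (hn : 1 ≤ n)
    (h : ConformalExponents n (α - n) p q) (hF : Admissible (sphereMeasure n) F) :
    rieszQuotient (sphereMeasure n) (α - n) p q F =
        rieszQuotient (sphereMeasure n) (α - n) p q (fun _ ↦ 1) ↔
      ∃ (a : ℝ) (η : EuclideanSpace ℝ (Fin (n + 1))), 0 < a ∧ ‖η‖ < 1 ∧
        ∀ᵐ ξ ∂sphereMeasure n,
          F ξ = a * (1 - ⟪(ξ : EuclideanSpace ℝ (Fin (n + 1))), η⟫) ^ (-((n + α) / 2)) := by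
  have : NullSingletonClass (surfaceMeasure (EuclideanSpace ℝ (Fin (n + 1)))) :=
    nullSingletonClass_sphereMeasure hn
  have hfinrank : (finrank ℝ (EuclideanSpace ℝ (Fin (n + 1))) : ℝ) = n + 1 := by
    rw [finrank_euclideanSpace_fin, Nat.cast_succ]
  have hexponent : -((n + α) / 2) =
      1 - finrank ℝ (EuclideanSpace ℝ (Fin (n + 1))) - (α - n) / 2 := by
    rw [hfinrank]
    ring
  rw [sphereMeasure_eq_surfaceMeasure] at hF ⊢
  rw [hexponent, ← exists_ae_eq_mul_boostFactor_rpow_iff]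
  exact rieszQuotient_eq_rieszQuotient_one_iff (by rwa [hfinrank, add_sub_cancel_right]) hF

end SphereRiesz

/-- **Extremal functions for the sharp reversed HLS inequality on the sphere**
(Theorem 1.2, equality case): for `1 ≤ n < α`, `p = 2n/(n+α)`, `q = 2n/(n-α)`, a
nonnegative `F ∈ L^p(𝕊ⁿ)`, not identically zero, achieves equality
`‖Ĩ_α F‖_{L^q(𝕊ⁿ)} = N*(n,α) ‖F‖_{L^p(𝕊ⁿ)}` if and only if
`F(ξ) = a (1 - ξ·η)^(-(n+α)/2)` for some `a > 0` and `η ∈ ℝ^(n+1)` with `|η| < 1`. -/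
theorem sharp_reversed_HLS_sphere_extremals (n : ℕ) (hn : 1 ≤ n) (α p q : ℝ)
    (hα : (n : ℝ) < α)
    (hp : p = 2 * n / ((n : ℝ) + α)) (hq : q = 2 * n / ((n : ℝ) - α))
    (F : sphere (0 : EuclideanSpace ℝ (Fin (n + 1))) 1 → ℝ)
    (hF : Measurable F) (hFpos : ∀ ξ, 0 ≤ F ξ)
    (hFLp : Integrable (fun ξ => |F ξ| ^ p) (sphereMeasure n))
    (hFne : ¬ (F =ᵐ[sphereMeasure n] 0)) :
    (∫⁻ ξ, (sphereRiesz n α F ξ) ^ q ∂(sphereMeasure n)) ^ (1 / q) =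
        ENNReal.ofReal
          ((Real.pi ^ (((n : ℝ) - α) / 2) * (Real.Gamma (α / 2) / Real.Gamma (((n : ℝ) + α) / 2)) *
              (Real.Gamma ((n : ℝ) / 2) / Real.Gamma (n : ℝ)) ^ (-(α / (n : ℝ)))) *
            (∫ ξ, |F ξ| ^ p ∂(sphereMeasure n)) ^ (1 / p)) ↔
      ∃ (a : ℝ) (η : EuclideanSpace ℝ (Fin (n + 1))), 0 < a ∧ ‖η‖ < 1 ∧
        ∀ᵐ ξ ∂(sphereMeasure n),
          F ξ = a * (1 - ⟪(ξ : EuclideanSpace ℝ (Fin (n + 1))), η⟫) ^ (-(((n : ℝ) + α) / 2)) := by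
  have hexp := conformalExponents_of_eq_div hn hα hp hq
  by_cases hint : Integrable F (sphereMeasure n)
  · have := nullSingletonClass_sphereMeasure hn
    have hadm : Admissible (sphereMeasure n) F := .of_not_ae_eq_zero hint hFpos hFne
    have hs := hexp.order_pos.le
    have hFp := hadm.lpQuasinorm_pos hexp.reverseHolderConjugate
    have hN := (Admissible.of_continuous (μ := sphereMeasure n) continuous_const
      fun _ ↦ one_pos).rieszQuotient_pos hexp.reverseHolderConjugate hs
    rw [hadm.lintegral_sphereRiesz_rpow_eq_ofReal hn hα.le, ← lpQuasinorm,
      ← rieszQuotient_sphereMeasure_one hn hexp, ENNReal.ofReal_eq_ofReal_iff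
        (hadm.lpQuasinorm_rieszPotential_pos hs).le (mul_pos hN hFp).le, ← div_eq_iff hFp.ne']
    exact hadm.rieszQuotient_sphereMeasure_eq_iff hn hexp
  · refine iff_of_false ?_ ?_
    · rw [lintegral_sphereRiesz_rpow_eq_top hn hα.le hF hFpos hint hexp.reverseHolderConjugate.neg]
      exact ENNReal.ofReal_ne_top.symm
    · rintro ⟨a, η, -, hη, hae⟩
      have hcont := (continuous_one_sub_inner_rpow hη (-((n + α) / 2))).const_mul a
      exact hint ((integrable_of_continuous hcont).congr (Filter.EventuallyEq.symm hae))
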